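/- Under the non-stationary zero-returns model with mixing, and with the kernel estimators defined from a kernel and bandwidth satisfying the kernel and bandwidth assumption, the vector Γ̂_vpr(m) = (ρ̂_vpr(1),…,ρ̂_vpr(m))' converges in probability, as n → ∞, to Γ_ε(m) = (ρ_ε(1),…,ρ_ε(m))'. -/

import Mathlib

open MeasureTheory ProbabilityTheory Filter Set

namespace ZeroReturnsNS

variable {Ω : Type*} [MeasurableSpace Ω]

/-- A function is piecewise Lipschitz on `(0,1]` if `(0,1]` is a finite disjoint union of
intervals on each of which the function is Lipschitz. -/
def PiecewiseLipschitzOn01 (f : ℝ → ℝ) : Prop :=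
  ∃ (p : ℕ) (I : Fin p → Set ℝ) (C : Fin p → NNReal),
    (∀ l, (I l).OrdConnected) ∧
    Pairwise (Function.onFun Disjoint I) ∧
    (⋃ l, I l) = Set.Ioc (0 : ℝ) 1 ∧
    ∀ l, LipschitzOnWith (C l) f (I l)

/-- The triangular array of returns `r_t = v(t/n) ε_t`. -/
noncomputable def rproc (v : ℝ → ℝ) (ε : ℕ → ℕ → Ω → ℝ) (n t : ℕ) (ω : Ω) : ℝ :=
  v ((t : ℝ) / n) * ε n t ω

/-- The zero-return indicator `a_t = 1_{r_t ≠ 0}`. -/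
noncomputable def aproc (v : ℝ → ℝ) (ε : ℕ → ℕ → Ω → ℝ) (n t : ℕ) (ω : Ω) : ℝ :=
  if rproc v ε n t ω ≠ 0 then 1 else 0

/-- The σ-field `σ(ε_u : u ≤ t)` of the past of the `n`-th row of the array. -/
noncomputable def pastField (ε : ℕ → ℕ → Ω → ℝ) (n t : ℕ) : MeasurableSpace Ω :=
  ⨆ u ∈ {u : ℕ | u ≤ t}, MeasurableSpace.comap (ε n u) inferInstance

/-- The σ-field `σ(ε_u : u ≥ t)` of the future of the `n`-th row of the array. -/
noncomputable def futureField (ε : ℕ → ℕ → Ω → ℝ) (n t : ℕ) : MeasurableSpace Ω :=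
  ⨆ u ∈ {u : ℕ | t ≤ u}, MeasurableSpace.comap (ε n u) inferInstance

/-- The strong (α-)mixing coefficients of `(ε_t)`:
`α_ε(h) = sup { |P(A∩B) - P(A)P(B)| : A ∈ σ(ε_u : u ≤ t), B ∈ σ(ε_u : u ≥ t+h) }`. -/
noncomputable def alphaMix (μ : Measure Ω) (ε : ℕ → ℕ → Ω → ℝ) (h : ℕ) : ℝ :=
  ⨆ n : ℕ, ⨆ t : ℕ, sSup {x : ℝ | ∃ A B : Set Ω,
    MeasurableSet[pastField ε n t] A ∧ MeasurableSet[futureField ε n (t + h)] B ∧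
    x = |(μ (A ∩ B)).toReal - (μ A).toReal * (μ B).toReal|}

/-- `K_{ti} = K((t-i)/(nb))` for `t ≠ i`, and `K_{tt} = 0`. -/
noncomputable def Kw (K : ℝ → ℝ) (b : ℕ → ℝ) (n t i : ℕ) : ℝ :=
  if t = i then 0 else K (((t : ℝ) - (i : ℝ)) / ((n : ℝ) * b n))

/-- The kernel weights `w_{tj}(b) = K_{tj} / Σ_{i=1}^n K_{ti}`. -/
noncomputable def wgt (K : ℝ → ℝ) (b : ℕ → ℝ) (n t j : ℕ) : ℝ :=
  Kw K b n t j / ∑ i ∈ Finset.Icc 1 n, Kw K b n t i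

/-- The kernel estimator `p̂_t = Σ_{j=1}^n w_{tj}(b) a_j` of `P(a_t = 1)`. -/
noncomputable def phat (v : ℝ → ℝ) (ε : ℕ → ℕ → Ω → ℝ) (K : ℝ → ℝ) (b : ℕ → ℝ)
    (n t : ℕ) (ω : Ω) : ℝ :=
  ∑ j ∈ Finset.Icc 1 n, wgt K b n t j * aproc v ε n j ω

/-- The kernel estimator `p̂_{t,t-h} = Σ_{j=1+h}^n w_{tj}(b) a_j a_{j-h}` of
`P(a_t a_{t-h} = 1)`. -/
noncomputable def phat2 (v : ℝ → ℝ) (ε : ℕ → ℕ → Ω → ℝ) (K : ℝ → ℝ) (b : ℕ → ℝ)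
    (n h t : ℕ) (ω : Ω) : ℝ :=
  ∑ j ∈ Finset.Icc (h + 1) n, wgt K b n t j * (aproc v ε n j ω * aproc v ε n (j - h) ω)

/-- `γ̂_{ar²}(h) = (n-h)⁻¹ Σ_{t=1+h}^n r_t² p̂_{t,t-h}/p̂_t`
(terms with `p̂_t = 0` are set to zero). -/
noncomputable def gammaAr2 (v : ℝ → ℝ) (ε : ℕ → ℕ → Ω → ℝ) (K : ℝ → ℝ) (b : ℕ → ℝ)
    (n h : ℕ) (ω : Ω) : ℝ :=
  ((n : ℝ) - (h : ℝ))⁻¹ * ∑ t ∈ Finset.Icc (h + 1) n, (rproc v ε n t ω) ^ 2 *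
    (if phat v ε K b n t ω = 0 then 0 else phat2 v ε K b n h t ω / phat v ε K b n t ω)

/-- `γ̂_0(h) = n⁻¹ Σ_{t=1+h}^n r_t r_{t-h}`. -/
noncomputable def gammaHat0 (v : ℝ → ℝ) (ε : ℕ → ℕ → Ω → ℝ) (n h : ℕ) (ω : Ω) : ℝ :=
  (n : ℝ)⁻¹ * ∑ t ∈ Finset.Icc (h + 1) n, rproc v ε n t ω * rproc v ε n (t - h) ω

/-- `γ̂_a(h) = n⁻¹ Σ_{t=1+h}^n a_t a_{t-h}`. -/
noncomputable def gammaHatA (v : ℝ → ℝ) (ε : ℕ → ℕ → Ω → ℝ) (n h : ℕ) (ω : Ω) : ℝ :=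
  (n : ℝ)⁻¹ * ∑ t ∈ Finset.Icc (h + 1) n, aproc v ε n t ω * aproc v ε n (t - h) ω

/-- `ρ̂_0(h) = γ̂_0(h)/γ̂_0(0)`. -/
noncomputable def rhoHat0 (v : ℝ → ℝ) (ε : ℕ → ℕ → Ω → ℝ) (n h : ℕ) (ω : Ω) : ℝ :=
  gammaHat0 v ε n h ω / gammaHat0 v ε n 0 ω

/-- `ρ̂_vpr(h) = (γ̂_0(0)/γ̂_{ar²}(h)) ρ̂_0(h)`. -/
noncomputable def rhoHatVpr (v : ℝ → ℝ) (ε : ℕ → ℕ → Ω → ℝ) (K : ℝ → ℝ) (b : ℕ → ℝ)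
    (n h : ℕ) (ω : Ω) : ℝ :=
  (gammaHat0 v ε n 0 ω / gammaAr2 v ε K b n h ω) * rhoHat0 v ε n h ω

/-- `ρ̂_pr(h) = ρ̂_0(h) γ̂_a(0)/γ̂_a(h)`. -/
noncomputable def rhoHatPr (v : ℝ → ℝ) (ε : ℕ → ℕ → Ω → ℝ) (n h : ℕ) (ω : Ω) : ℝ :=
  rhoHat0 v ε n h ω * (gammaHatA v ε n 0 ω / gammaHatA v ε n h ω)

end ZeroReturnsNS

namespace ZeroReturnsNS

section Covariance

variable {Ω : Type*} {m₁ m₂ m₀ : MeasurableSpace Ω} {μ : Measure Ω} [IsProbabilityMeasure μ]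

lemma integral_mul_le_of_setIntegral_le (hm : m₁ ≤ m₀) {X Z : Ω → ℝ} {a : ℝ}
    (hZ : Integrable Z μ) (hX : Measurable[m₁] X) (hX0 : ∀ ω, 0 ≤ X ω) (hX1 : ∀ ω, X ω ≤ 1)
    (hA : ∀ A, MeasurableSet[m₁] A → ∫ ω in A, Z ω ∂μ ≤ a) :
    ∫ ω, X ω * Z ω ∂μ ≤ a := by
  set W := μ[Z|m₁] with hW
  have hWm : StronglyMeasurable[m₁] W := stronglyMeasurable_condExp
  have hWi : Integrable W μ := integrable_condExp
  have hXb : ∀ᵐ ω ∂μ, ‖X ω‖ ≤ 1 := ae_of_all _ fun ω => by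
    rw [Real.norm_eq_abs, abs_of_nonneg (hX0 ω)]; exact hX1 ω
  have hXs : AEStronglyMeasurable X μ := (hX.mono hm le_rfl).aestronglyMeasurable
  have hXZ : Integrable (X * Z) μ := hZ.bdd_mul hXs hXb
  have hXW : Integrable (fun ω => X ω * W ω) μ := hWi.bdd_mul hXs hXb
  set A : Set Ω := {ω | 0 < W ω} with hAdef
  have hAm : MeasurableSet[m₁] A := measurableSet_lt measurable_const hWm.measurable
  calc ∫ ω, X ω * Z ω ∂μ = ∫ ω, (μ[X * Z|m₁]) ω ∂μ := (integral_condExp hm).symm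
    _ = ∫ ω, X ω * W ω ∂μ :=
        integral_congr_ae (condExp_mul_of_stronglyMeasurable_left hX.stronglyMeasurable hXZ hZ)
    _ ≤ ∫ ω, A.indicator W ω ∂μ := by
        refine integral_mono hXW (hWi.indicator (hm _ hAm)) fun ω => ?_
        by_cases hω : 0 < W ω
        · rw [indicator_of_mem (show ω ∈ A from hω)]
          nlinarith [hX1 ω]
        · rw [indicator_of_notMem (show ω ∉ A from hω)]
          nlinarith [hX0 ω]
    _ = ∫ ω in A, Z ω ∂μ := by
        rw [integral_indicator (hm _ hAm), setIntegral_condExp hm hZ hAm]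
    _ ≤ a := hA A hAm

lemma abs_integral_mul_le_of_setIntegral (hm : m₁ ≤ m₀) {X Z : Ω → ℝ} {a : ℝ}
    (hZ : Integrable Z μ) (hX : Measurable[m₁] X) (hX0 : ∀ ω, 0 ≤ X ω) (hX1 : ∀ ω, X ω ≤ 1)
    (hA : ∀ A, MeasurableSet[m₁] A → |∫ ω in A, Z ω ∂μ| ≤ a) :
    |∫ ω, X ω * Z ω ∂μ| ≤ a := by
  refine abs_le'.2 ⟨integral_mul_le_of_setIntegral_le hm hZ hX hX0 hX1
    fun A h => (le_abs_self _).trans (hA A h), ?_⟩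
  have := integral_mul_le_of_setIntegral_le hm hZ.neg hX hX0 hX1 (a := a)
    fun A h => by
      simp only [Pi.neg_apply, integral_neg]
      exact (neg_le_abs _).trans (hA A h)
  simpa [integral_neg] using this

/-- Covariance inequality for `[0,1]`-valued variables under strong mixing. -/
lemma abs_covariance_le_of_mem_unit (h₁ : m₁ ≤ m₀) (h₂ : m₂ ≤ m₀) {X Y : Ω → ℝ} {a : ℝ}
    (hX : Measurable[m₁] X) (hY : Measurable[m₂] Y)
    (hX0 : ∀ ω, 0 ≤ X ω) (hX1 : ∀ ω, X ω ≤ 1) (hY0 : ∀ ω, 0 ≤ Y ω) (hY1 : ∀ ω, Y ω ≤ 1)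
    (ha : ∀ A B, MeasurableSet[m₁] A → MeasurableSet[m₂] B →
      |(μ (A ∩ B)).toReal - (μ A).toReal * (μ B).toReal| ≤ a) :
    |∫ ω, X ω * Y ω ∂μ - (∫ ω, X ω ∂μ) * ∫ ω, Y ω ∂μ| ≤ a := by
  have bdd_int : ∀ {W : Ω → ℝ}, Measurable W → (∀ ω, 0 ≤ W ω) → (∀ ω, W ω ≤ 1) →
      Integrable W μ := fun hW h0 h1 =>
    Integrable.of_bound hW.aestronglyMeasurable 1 (ae_of_all _ fun ω => by
      rw [Real.norm_eq_abs, abs_of_nonneg (h0 ω)]; exact h1 ω)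
  have hXi := bdd_int (hX.mono h₁ le_rfl) hX0 hX1
  have hYi := bdd_int (hY.mono h₂ le_rfl) hY0 hY1
  have key := abs_integral_mul_le_of_setIntegral h₁ (Z := fun ω => Y ω - ∫ ω, Y ω ∂μ) (a := a)
    (hYi.sub (integrable_const _)) hX hX0 hX1 ?_
  · have hXY : Integrable (fun ω => X ω * Y ω) μ :=
      hYi.bdd_mul (c := 1) hXi.1 (ae_of_all _ fun ω => by
        rw [Real.norm_eq_abs, abs_of_nonneg (hX0 ω)]; exact hX1 ω)
    simp_rw [mul_sub] at key
    rwa [integral_sub hXY (hXi.mul_const _), integral_mul_const] at key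
  · intro A hA
    have hA' := h₁ _ hA
    have key := abs_integral_mul_le_of_setIntegral h₂ (a := a)
      (Z := fun ω => A.indicator (fun _ => (1 : ℝ)) ω - μ.real A)
      (((integrable_const (μ := μ) (1 : ℝ)).indicator hA').sub (integrable_const _)) hY hY0 hY1 ?_
    · have hYA : Integrable (fun ω => Y ω * A.indicator (fun _ => (1 : ℝ)) ω) μ := by
        refine ((integrable_const (1 : ℝ)).indicator hA').bdd_mul (c := 1) hYi.1
          (ae_of_all _ fun ω => ?_)
        rw [Real.norm_eq_abs, abs_of_nonneg (hY0 ω)]; exact hY1 ω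
      simp_rw [mul_sub] at key
      rw [integral_sub hYA (hYi.mul_const _), integral_mul_const] at key
      rw [integral_sub hYi.integrableOn (integrable_const (μ := μ.restrict A) _),
        setIntegral_const, smul_eq_mul,
        ← integral_indicator hA', mul_comm]
      convert key using 4
      ext ω
      by_cases hω : ω ∈ A <;> simp [hω]
    · intro B hB
      have hB' := h₂ _ hB
      rw [integral_sub ((integrable_const (1 : ℝ)).indicator hA').integrableOn
        (integrable_const _), setIntegral_const, setIntegral_indicator hA', setIntegral_const]
      have := ha A B hA hB
      rw [inter_comm] at this
      simpa [Measure.real, mul_comm] using this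

/-- Covariance inequality for bounded variables under strong mixing. -/
lemma abs_covariance_le_of_bounded (h₁ : m₁ ≤ m₀) (h₂ : m₂ ≤ m₀) {X Y : Ω → ℝ} {a M : ℝ}
    (hM : 0 < M) (hX : Measurable[m₁] X) (hY : Measurable[m₂] Y)
    (hXM : ∀ ω, |X ω| ≤ M) (hYM : ∀ ω, |Y ω| ≤ M)
    (ha : ∀ A B, MeasurableSet[m₁] A → MeasurableSet[m₂] B →
      |(μ (A ∩ B)).toReal - (μ A).toReal * (μ B).toReal| ≤ a) :
    |∫ ω, X ω * Y ω ∂μ - (∫ ω, X ω ∂μ) * ∫ ω, Y ω ∂μ| ≤ 4 * M ^ 2 * a := by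
  have hXi : Integrable X μ := Integrable.of_bound (hX.mono h₁ le_rfl).aestronglyMeasurable M
    (ae_of_all _ hXM)
  have hYi : Integrable Y μ := Integrable.of_bound (hY.mono h₂ le_rfl).aestronglyMeasurable M
    (ae_of_all _ hYM)
  have hXYi : Integrable (fun ω => X ω * Y ω) μ := hYi.bdd_mul hXi.1 (ae_of_all _ hXM)
  have key := abs_covariance_le_of_mem_unit (μ := μ) h₁ h₂
    (X := fun ω => (X ω + M) / (2 * M)) (Y := fun ω => (Y ω + M) / (2 * M)) (a := a)
    ((hX.add_const M).div_const _) ((hY.add_const M).div_const _)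
    (fun ω => div_nonneg (by linarith [(abs_le.1 (hXM ω)).1]) (by positivity))
    (fun ω => (div_le_one (by positivity)).2 (by linarith [(abs_le.1 (hXM ω)).2]))
    (fun ω => div_nonneg (by linarith [(abs_le.1 (hYM ω)).1]) (by positivity))
    (fun ω => (div_le_one (by positivity)).2 (by linarith [(abs_le.1 (hYM ω)).2])) ha
  have e1 : ∫ ω, (X ω + M) / (2 * M) ∂μ = (∫ ω, X ω ∂μ + M) / (2 * M) := by
    rw [integral_div, integral_add hXi (integrable_const _)]; simp
  have e2 : ∫ ω, (Y ω + M) / (2 * M) ∂μ = (∫ ω, Y ω ∂μ + M) / (2 * M) := by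
    rw [integral_div, integral_add hYi (integrable_const _)]; simp
  have e3 : ∫ ω, (X ω + M) / (2 * M) * ((Y ω + M) / (2 * M)) ∂μ
      = (∫ ω, X ω * Y ω ∂μ + M * ∫ ω, X ω ∂μ + M * ∫ ω, Y ω ∂μ + M ^ 2) / (4 * M ^ 2) := by
    have : ∀ ω, (X ω + M) / (2 * M) * ((Y ω + M) / (2 * M))
        = (X ω * Y ω + M * X ω + M * Y ω + M ^ 2) / (4 * M ^ 2) := fun ω => by
      field_simp; ring
    simp_rw [this]
    have i1 : Integrable (fun ω => X ω * Y ω + M * X ω) μ := hXYi.add (hXi.const_mul M)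
    have i2 : Integrable (fun ω => X ω * Y ω + M * X ω + M * Y ω) μ := i1.add (hYi.const_mul M)
    rw [integral_div, integral_add i2 (integrable_const _), integral_add i1 (hYi.const_mul M),
      integral_add hXYi (hXi.const_mul M), integral_const_mul, integral_const_mul]
    simp
  rw [e1, e2, e3] at key
  have e4 : ∫ ω, X ω * Y ω ∂μ - (∫ ω, X ω ∂μ) * ∫ ω, Y ω ∂μ = 4 * M ^ 2 *
      ((∫ ω, X ω * Y ω ∂μ + M * ∫ ω, X ω ∂μ + M * ∫ ω, Y ω ∂μ + M ^ 2) / (4 * M ^ 2)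
        - (∫ ω, X ω ∂μ + M) / (2 * M) * ((∫ ω, Y ω ∂μ + M) / (2 * M))) := by
    field_simp; ring
  rw [e4, abs_mul, abs_of_pos (by positivity : 0 < 4 * M ^ 2)]
  gcongr

end Covariance

section Mixing

lemma measurable_pastField {Ω : Type*} {ε : ℕ → ℕ → Ω → ℝ} {n u t : ℕ} (h : u ≤ t) : Measurable[pastField ε n t] (ε n u) :=
  measurable_iff_comap_le.2 (le_iSup₂_of_le (f := fun (u : ℕ) (_ : u ∈ {u : ℕ | u ≤ t}) =>
    MeasurableSpace.comap (ε n u) inferInstance) u h le_rfl)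

lemma measurable_futureField {Ω : Type*} {ε : ℕ → ℕ → Ω → ℝ} {n u t : ℕ} (h : t ≤ u) : Measurable[futureField ε n t] (ε n u) :=
  measurable_iff_comap_le.2 (le_iSup₂_of_le (f := fun (u : ℕ) (_ : u ∈ {u : ℕ | t ≤ u}) =>
    MeasurableSpace.comap (ε n u) inferInstance) u h le_rfl)

variable {Ω : Type*} [MeasurableSpace Ω] {μ : Measure Ω} [IsProbabilityMeasure μ]
  {ε : ℕ → ℕ → Ω → ℝ}

lemma abs_measure_inter_sub_le_one (A B : Set Ω) :
    |(μ (A ∩ B)).toReal - (μ A).toReal * (μ B).toReal| ≤ 1 := by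
  have hA : (μ A).toReal ≤ 1 := measureReal_le_one
  have hB : (μ B).toReal ≤ 1 := measureReal_le_one
  have hAB : (μ (A ∩ B)).toReal ≤ 1 := measureReal_le_one
  have := @ENNReal.toReal_nonneg (μ A)
  have := @ENNReal.toReal_nonneg (μ B)
  have := @ENNReal.toReal_nonneg (μ (A ∩ B))
  rw [abs_le]
  constructor <;> nlinarith

lemma le_alphaMix (n t h : ℕ) {A B : Set Ω} (hA : MeasurableSet[pastField ε n t] A)
    (hB : MeasurableSet[futureField ε n (t + h)] B) :
    |(μ (A ∩ B)).toReal - (μ A).toReal * (μ B).toReal| ≤ alphaMix μ ε h := by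
  have hle : ∀ n t : ℕ, sSup {x : ℝ | ∃ A B : Set Ω,
      MeasurableSet[pastField ε n t] A ∧ MeasurableSet[futureField ε n (t + h)] B ∧
      x = |(μ (A ∩ B)).toReal - (μ A).toReal * (μ B).toReal|} ≤ 1 := fun n t =>
    Real.sSup_le (by rintro x ⟨A, B, -, -, rfl⟩; exact abs_measure_inter_sub_le_one A B)
      zero_le_one
  have h1 : |(μ (A ∩ B)).toReal - (μ A).toReal * (μ B).toReal| ≤ sSup {x : ℝ | ∃ A B : Set Ω,
      MeasurableSet[pastField ε n t] A ∧ MeasurableSet[futureField ε n (t + h)] B ∧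
      x = |(μ (A ∩ B)).toReal - (μ A).toReal * (μ B).toReal|} := by
    refine le_csSup ⟨1, ?_⟩ ⟨A, B, hA, hB, rfl⟩
    rintro x ⟨A, B, -, -, rfl⟩
    exact abs_measure_inter_sub_le_one A B
  have h2 : BddAbove (range fun t => sSup {x : ℝ | ∃ A B : Set Ω,
      MeasurableSet[pastField ε n t] A ∧ MeasurableSet[futureField ε n (t + h)] B ∧
      x = |(μ (A ∩ B)).toReal - (μ A).toReal * (μ B).toReal|}) :=
    ⟨1, by rintro x ⟨t, rfl⟩; exact hle n t⟩
  have h3 : BddAbove (range fun n => ⨆ t : ℕ, sSup {x : ℝ | ∃ A B : Set Ω,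
      MeasurableSet[pastField ε n t] A ∧ MeasurableSet[futureField ε n (t + h)] B ∧
      x = |(μ (A ∩ B)).toReal - (μ A).toReal * (μ B).toReal|}) :=
    ⟨1, by rintro x ⟨n, rfl⟩; exact ciSup_le fun t => hle n t⟩
  exact h1.trans ((le_ciSup h2 t).trans (le_ciSup h3 n))

lemma alphaMix_nonneg (h : ℕ) : 0 ≤ alphaMix μ ε h :=
  (abs_nonneg _).trans (le_alphaMix (μ := μ) (ε := ε) 0 0 h (A := ∅) (B := ∅)
    (@MeasurableSet.empty _ (_)) (@MeasurableSet.empty _ (_)))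

lemma tendsto_alphaMix_of_summable_rpow {p : ℝ} (hp : 0 < p)
    (hs : Summable fun h => alphaMix μ ε h ^ p) :
    Tendsto (alphaMix μ ε) atTop (nhds 0) := by
  have := hs.tendsto_atTop_zero.rpow_const (p := p⁻¹) (Or.inr (by positivity))
  rw [Real.zero_rpow (inv_ne_zero hp.ne')] at this
  refine this.congr fun h => ?_
  rw [← Real.rpow_mul (alphaMix_nonneg h), mul_inv_cancel₀ hp.ne', Real.rpow_one]

lemma pastField_le (hε : ∀ n t, Measurable (ε n t)) (n t : ℕ) :
    pastField ε n t ≤ ‹MeasurableSpace Ω› :=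
  iSup₂_le fun u _ => (hε n u).comap_le

lemma futureField_le (hε : ∀ n t, Measurable (ε n t)) (n t : ℕ) :
    futureField ε n t ≤ ‹MeasurableSpace Ω› :=
  iSup₂_le fun u _ => (hε n u).comap_le

end Mixing

section WeakLaw

/-- `X` is a function of `ε_{t-h},…,ε_t` only. -/
def WindowMeasurable {Ω : Type*} (ε : ℕ → ℕ → Ω → ℝ) (n h t : ℕ) (X : Ω → ℝ) : Prop :=
  Measurable[pastField ε n t] X ∧ Measurable[futureField ε n (t - h)] X

variable {Ω : Type*} [MeasurableSpace Ω] {μ : Measure Ω} [IsProbabilityMeasure μ]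
  {ε : ℕ → ℕ → Ω → ℝ}

lemma WindowMeasurable.measurable {n h t : ℕ} {X : Ω → ℝ} (hX : WindowMeasurable ε n h t X)
    (hε : ∀ n t, Measurable (ε n t)) : Measurable X :=
  hX.1.mono (pastField_le hε n t) le_rfl

lemma WindowMeasurable.comp {Ω : Type*} {ε : ℕ → ℕ → Ω → ℝ} {n h t : ℕ} {X : Ω → ℝ}
    {f : ℝ → ℝ} (hf : Measurable f) (hX : WindowMeasurable ε n h t X) :
    WindowMeasurable ε n h t fun ω => f (X ω) :=
  ⟨hf.comp hX.1, hf.comp hX.2⟩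

lemma abs_covariance_le_alphaMix (hε : ∀ n t, Measurable (ε n t)) {n h k s t : ℕ} {M : ℝ}
    (hM : 0 < M) {X Y : Ω → ℝ} (hst : s + k + h = t)
    (hX : WindowMeasurable ε n h s X) (hY : WindowMeasurable ε n h t Y)
    (hXM : ∀ ω, |X ω| ≤ M) (hYM : ∀ ω, |Y ω| ≤ M) :
    |∫ ω, X ω * Y ω ∂μ - (∫ ω, X ω ∂μ) * ∫ ω, Y ω ∂μ| ≤ 4 * M ^ 2 * alphaMix μ ε k := by
  have ht : t - h = s + k := by omega
  have hY2 := hY.2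
  rw [ht] at hY2
  exact abs_covariance_le_of_bounded (pastField_le hε n s) (futureField_le hε n (s + k)) hM
    hX.1 hY2 hXM hYM fun A B hA hB => le_alphaMix n s k hA hB

lemma card_filter_close_le (S : Finset ℕ) (s L : ℕ) :
    (S.filter fun t => ¬ (s + L ≤ t) ∧ ¬ (t + L ≤ s)).card ≤ 2 * L + 1 := by
  refine (Finset.card_le_card (t := Finset.Icc (s - L) (s + L)) fun t ht => ?_).trans ?_
  · simp only [Finset.mem_filter, Finset.mem_Icc] at ht ⊢
    omega
  · rw [Nat.card_Icc]; omega

/-- Weak law of large numbers for uniformly bounded arrays, with arbitrary small weights. -/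
lemma exists_weight_bound_of_bounded (hε : ∀ n t, Measurable (ε n t))
    (hα : Tendsto (alphaMix μ ε) atTop (nhds 0)) (h : ℕ) {M η : ℝ} (hM : 0 < M) (hη : 0 < η) :
    ∃ W₀ > 0, ∀ (n : ℕ) (S : Finset ℕ) (w : ℕ → ℝ) (X : ℕ → Ω → ℝ),
      (∀ t ∈ S, 0 ≤ w t) → (∀ t ∈ S, w t ≤ W₀) → ∑ t ∈ S, w t ≤ 1 →
      (∀ t ∈ S, WindowMeasurable ε n h t (X t)) → (∀ t ∈ S, ∀ ω, |X t ω| ≤ M) →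
      ∫ ω, |∑ t ∈ S, w t * (X t ω - ∫ ω, X t ω ∂μ)| ∂μ ≤ η := by
  obtain ⟨L, hL⟩ : ∃ L, ∀ k ≥ L, alphaMix μ ε k ≤ η ^ 2 / (8 * M ^ 2) := by
    have := hα.eventually (ge_mem_nhds (show 0 < η ^ 2 / (8 * M ^ 2) by positivity))
    exact eventually_atTop.1 this
  set N : ℝ := 2 * ((L + h : ℕ) : ℝ) + 1 with hN
  have hNpos : 0 < N := by positivity
  refine ⟨η ^ 2 / (8 * M ^ 2 * N), by positivity, ?_⟩
  intro n S w X hw0 hwW hw1 hXm hXM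
  have hXmeas : ∀ t ∈ S, Measurable (X t) := fun t ht => (hXm t ht).measurable hε
  have hXi : ∀ t ∈ S, Integrable (X t) μ := fun t ht =>
    Integrable.of_bound (hXmeas t ht).aestronglyMeasurable M (ae_of_all _ (hXM t ht))
  have hXXi : ∀ s ∈ S, ∀ t ∈ S, Integrable (fun ω => X s ω * X t ω) μ := fun s hs t ht =>
    (hXi t ht).bdd_mul (hXi s hs).1 (ae_of_all _ (hXM s hs))
  have hEM : ∀ t ∈ S, |∫ ω, X t ω ∂μ| ≤ M := fun t ht => by
    have := norm_integral_le_of_norm_le_const (μ := μ) (f := X t) (C := M)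
      (ae_of_all _ (hXM t ht))
    simpa using this
  set Z : ℕ → Ω → ℝ := fun t ω => X t ω - ∫ ω, X t ω ∂μ with hZ
  have hZM : ∀ t ∈ S, ∀ ω, |Z t ω| ≤ 2 * M := fun t ht ω => by
    have := abs_sub (X t ω) (∫ ω, X t ω ∂μ)
    have := hXM t ht ω
    have := hEM t ht
    simp only [hZ]; linarith
  have hZi : ∀ t ∈ S, Integrable (Z t) μ := fun t ht => (hXi t ht).sub (integrable_const _)
  have hZZi : ∀ s ∈ S, ∀ t ∈ S, Integrable (fun ω => Z s ω * Z t ω) μ := fun s hs t ht =>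
    (hZi t ht).bdd_mul (hZi s hs).1 (ae_of_all _ (hZM s hs))
  have hZZ : ∀ s ∈ S, ∀ t ∈ S, ∫ ω, Z s ω * Z t ω ∂μ
      = ∫ ω, X s ω * X t ω ∂μ - (∫ ω, X s ω ∂μ) * ∫ ω, X t ω ∂μ := by
    intro s hs t ht
    have e : ∀ ω, Z s ω * Z t ω = X s ω * X t ω - (∫ ω, X t ω ∂μ) * X s ω
        - (∫ ω, X s ω ∂μ) * X t ω + (∫ ω, X s ω ∂μ) * ∫ ω, X t ω ∂μ := fun ω => by
      simp only [hZ]; ring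
    have i1 : Integrable (fun ω => X s ω * X t ω - (∫ ω, X t ω ∂μ) * X s ω) μ :=
      (hXXi s hs t ht).sub ((hXi s hs).const_mul _)
    have i2 : Integrable (fun ω => X s ω * X t ω - (∫ ω, X t ω ∂μ) * X s ω
        - (∫ ω, X s ω ∂μ) * X t ω) μ := i1.sub ((hXi t ht).const_mul _)
    simp_rw [e]
    rw [integral_add i2 (integrable_const _), integral_sub i1 ((hXi t ht).const_mul _),
      integral_sub (hXXi s hs t ht) ((hXi s hs).const_mul _), integral_const_mul,
      integral_const_mul]
    simp
    ring
  have hcovM : ∀ s ∈ S, ∀ t ∈ S, |∫ ω, Z s ω * Z t ω ∂μ| ≤ 4 * M ^ 2 := by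
    intro s hs t ht
    have := norm_integral_le_of_norm_le_const (μ := μ) (f := fun ω => Z s ω * Z t ω)
      (C := 4 * M ^ 2) (ae_of_all _ fun ω => by
        rw [Real.norm_eq_abs, abs_mul]
        have := hZM s hs ω
        have := hZM t ht ω
        nlinarith [abs_nonneg (Z s ω), abs_nonneg (Z t ω)])
    simpa using this
  have hcovη : ∀ s ∈ S, ∀ t ∈ S, s + (L + h) ≤ t →
      |∫ ω, Z s ω * Z t ω ∂μ| ≤ 4 * M ^ 2 * (η ^ 2 / (8 * M ^ 2)) := by
    intro s hs t ht hst
    rw [hZZ s hs t ht]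
    refine (abs_covariance_le_alphaMix hε hM (k := t - h - s) (by omega) (hXm s hs) (hXm t ht)
      (hXM s hs) (hXM t ht)).trans ?_
    gcongr
    exact hL _ (by omega)
  have hcov : ∀ s ∈ S, ∀ t ∈ S, |∫ ω, Z s ω * Z t ω ∂μ| ≤ 4 * M ^ 2 * (η ^ 2 / (8 * M ^ 2)
      + if ¬ (s + (L + h) ≤ t) ∧ ¬ (t + (L + h) ≤ s) then 1 else 0) := by
    intro s hs t ht
    have hpos : 0 ≤ η ^ 2 / (8 * M ^ 2) := by positivity
    by_cases h1 : s + (L + h) ≤ t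
    · simpa [h1] using hcovη s hs t ht h1
    by_cases h2 : t + (L + h) ≤ s
    · have := hcovη t ht s hs h2
      simp_rw [mul_comm (Z t _)] at this
      simpa [h2] using this
    · rw [if_pos ⟨h1, h2⟩]
      refine (hcovM s hs t ht).trans ?_
      nlinarith [sq_nonneg M, mul_nonneg (sq_nonneg M) hpos]
  have hrow : ∀ s ∈ S, ∑ t ∈ S, w t * |∫ ω, Z s ω * Z t ω ∂μ| ≤ η ^ 2 := by
    intro s hs
    calc ∑ t ∈ S, w t * |∫ ω, Z s ω * Z t ω ∂μ|
        ≤ ∑ t ∈ S, w t * (4 * M ^ 2 * (η ^ 2 / (8 * M ^ 2)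
            + if ¬ (s + (L + h) ≤ t) ∧ ¬ (t + (L + h) ≤ s) then 1 else 0)) :=
          Finset.sum_le_sum fun t ht => mul_le_mul_of_nonneg_left (hcov s hs t ht) (hw0 t ht)
      _ = η ^ 2 / 2 * ∑ t ∈ S, w t + 4 * M ^ 2 *
            ∑ t ∈ S with ¬ (s + (L + h) ≤ t) ∧ ¬ (t + (L + h) ≤ s), w t := by
          rw [Finset.sum_filter, Finset.mul_sum, Finset.mul_sum, ← Finset.sum_add_distrib]
          refine Finset.sum_congr rfl fun t _ => ?_
          split_ifs <;> field_simp <;> ring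
      _ ≤ η ^ 2 / 2 * 1 + 4 * M ^ 2 * (N * (η ^ 2 / (8 * M ^ 2 * N))) := by
          gcongr
          refine (Finset.sum_le_card_nsmul _ _ (η ^ 2 / (8 * M ^ 2 * N))
            fun t ht => hwW t (Finset.mem_filter.1 ht).1).trans ?_
          rw [nsmul_eq_mul]
          gcongr
          rw [hN]
          exact_mod_cast card_filter_close_le S s (L + h)
      _ = η ^ 2 := by field_simp; ring
  have hYi : Integrable (fun ω => ∑ t ∈ S, w t * Z t ω) μ :=
    integrable_finsetSum _ fun t ht => (hZi t ht).const_mul _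
  have hYsq : ∀ ω, (∑ t ∈ S, w t * Z t ω) ^ 2
      = ∑ s ∈ S, ∑ t ∈ S, w s * w t * (Z s ω * Z t ω) := fun ω => by
    rw [sq, Finset.sum_mul_sum]
    exact Finset.sum_congr rfl fun s _ => Finset.sum_congr rfl fun t _ => by ring
  have hYsqi : Integrable (fun ω => (∑ t ∈ S, w t * Z t ω) ^ 2) μ := by
    simp_rw [hYsq]
    exact integrable_finsetSum _ fun s hs => integrable_finsetSum _ fun t ht =>
      (hZZi s hs t ht).const_mul _
  have hvar : ∫ ω, (∑ t ∈ S, w t * Z t ω) ^ 2 ∂μ ≤ η ^ 2 := by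
    simp_rw [hYsq]
    rw [integral_finsetSum _ fun s hs => integrable_finsetSum _ fun t ht =>
      (hZZi s hs t ht).const_mul _]
    calc ∑ s ∈ S, ∫ ω, ∑ t ∈ S, w s * w t * (Z s ω * Z t ω) ∂μ
        = ∑ s ∈ S, w s * ∑ t ∈ S, w t * ∫ ω, Z s ω * Z t ω ∂μ := by
          refine Finset.sum_congr rfl fun s hs => ?_
          rw [integral_finsetSum _ fun t ht => (hZZi s hs t ht).const_mul _, Finset.mul_sum]
          refine Finset.sum_congr rfl fun t _ => ?_
          rw [integral_const_mul]; ring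
      _ ≤ ∑ s ∈ S, w s * η ^ 2 := by
          refine Finset.sum_le_sum fun s hs => mul_le_mul_of_nonneg_left ?_ (hw0 s hs)
          refine le_trans (Finset.sum_le_sum fun t ht => ?_) (hrow s hs)
          exact mul_le_mul_of_nonneg_left (le_abs_self _) (hw0 t ht)
      _ ≤ η ^ 2 := by
          rw [← Finset.sum_mul]
          nlinarith [sq_nonneg η]
  calc ∫ ω, |∑ t ∈ S, w t * Z t ω| ∂μ
      ≤ ∫ ω, (η / 2 + (∑ t ∈ S, w t * Z t ω) ^ 2 * (2 * η)⁻¹) ∂μ := by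
        refine integral_mono hYi.abs ((integrable_const _).add (hYsqi.mul_const _)) fun ω => ?_
        set y := ∑ t ∈ S, w t * Z t ω
        have h1 : 0 ≤ (|y| - η) ^ 2 * (2 * η)⁻¹ := by positivity
        have h2 : (|y| - η) ^ 2 * (2 * η)⁻¹ = y ^ 2 * (2 * η)⁻¹ + η / 2 - |y| := by
          rw [sub_sq, sq_abs]; field_simp; ring
        show |y| ≤ η / 2 + y ^ 2 * (2 * η)⁻¹
        linarith
    _ = η / 2 + (∫ ω, (∑ t ∈ S, w t * Z t ω) ^ 2 ∂μ) * (2 * η)⁻¹ := by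
        rw [integral_add (integrable_const _) (hYsqi.mul_const _), integral_mul_const]
        simp
    _ ≤ η / 2 + η ^ 2 * (2 * η)⁻¹ := by gcongr
    _ = η := by field_simp; ring

lemma abs_sub_clamp_le {ν M : ℝ} (hν : 0 < ν) (hM : 0 < M) (x : ℝ) :
    |x - max (-M) (min x M)| ≤ |x| ^ (1 + ν) * (M ^ ν)⁻¹ := by
  rcases le_total |x| M with h | h
  · have h' := abs_le.1 h
    rw [min_eq_left h'.2, max_eq_right h'.1, sub_self, abs_zero]
    positivity
  · have hx : 0 < |x| := hM.trans_le h
    have h1 : |x - max (-M) (min x M)| ≤ |x| := by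
      rcases le_total 0 x with hx0 | hx0
      · rw [abs_of_nonneg hx0] at *
        rw [min_eq_right h, max_eq_right (by linarith), abs_of_nonneg (by linarith)]
        linarith
      · rw [abs_of_nonpos hx0] at *
        rw [min_eq_left (by linarith), max_eq_left (by linarith), abs_of_nonpos (by linarith)]
        linarith
    refine h1.trans ?_
    rw [Real.rpow_add hx, Real.rpow_one, mul_assoc]
    refine le_mul_of_one_le_right hx.le ?_
    rw [← div_eq_mul_inv, one_le_div (by positivity)]
    exact Real.rpow_le_rpow hM.le h hν.le

lemma le_add_rpow_mul_inv {ν M : ℝ} (hν : 0 < ν) (hM : 0 < M) {x : ℝ} (hx : 0 ≤ x) :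
    x ≤ M + x ^ (1 + ν) * (M ^ ν)⁻¹ := by
  have h1 := abs_sub_clamp_le hν hM x
  rw [abs_of_nonneg hx] at h1
  have h2 : max (-M) (min x M) ≤ M := max_le (by linarith) (min_le_right _ _)
  linarith [le_abs_self (x - max (-M) (min x M))]

lemma exists_mul_inv_rpow_le {ν C η : ℝ} (hν : 0 < ν) (hη : 0 < η) :
    ∃ M > 0, C * (M ^ ν)⁻¹ ≤ η := by
  have h : Tendsto (fun M : ℝ => C * (M ^ ν)⁻¹) atTop (nhds 0) := by
    simpa using ((tendsto_rpow_atTop hν).inv_tendsto_atTop).const_mul C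
  obtain ⟨M, hM, hM0⟩ := ((h.eventually (ge_mem_nhds hη)).and (eventually_gt_atTop 0)).exists
  exact ⟨M, hM0, hM⟩

lemma integrable_of_integrable_abs_rpow {ν : ℝ} (hν : 0 < ν) {X : Ω → ℝ} (hX : Measurable X)
    (hi : Integrable (fun ω => |X ω| ^ (1 + ν)) μ) : Integrable X μ := by
  refine ((integrable_const (1 : ℝ)).add hi).mono' hX.aestronglyMeasurable
    (ae_of_all _ fun ω => ?_)
  simpa using le_add_rpow_mul_inv hν one_pos (abs_nonneg (X ω))

/-- Weak law of large numbers for arrays with bounded moments of order `1 + ν`, with arbitrary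
small weights. -/
lemma exists_weight_bound (hε : ∀ n t, Measurable (ε n t))
    (hα : Tendsto (alphaMix μ ε) atTop (nhds 0)) (h : ℕ) {ν C η : ℝ} (hν : 0 < ν)
    (hη : 0 < η) :
    ∃ W₀ > 0, ∀ (n : ℕ) (S : Finset ℕ) (w : ℕ → ℝ) (X : ℕ → Ω → ℝ),
      (∀ t ∈ S, 0 ≤ w t) → (∀ t ∈ S, w t ≤ W₀) → ∑ t ∈ S, w t ≤ 1 →
      (∀ t ∈ S, WindowMeasurable ε n h t (X t)) →
      (∀ t ∈ S, Integrable (fun ω => |X t ω| ^ (1 + ν)) μ) →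
      (∀ t ∈ S, ∫ ω, |X t ω| ^ (1 + ν) ∂μ ≤ C) →
      ∫ ω, |∑ t ∈ S, w t * (X t ω - ∫ ω, X t ω ∂μ)| ∂μ ≤ η := by
  obtain ⟨M, hM, hCM⟩ := exists_mul_inv_rpow_le (C := C) hν (show 0 < η / 4 by positivity)
  obtain ⟨W₀, hW₀, hW⟩ := exists_weight_bound_of_bounded hε hα h hM (show 0 < η / 2 by positivity)
  refine ⟨W₀, hW₀, ?_⟩
  intro n S w X hw0 hwW hw1 hXm hXi hXC
  set T : ℝ → ℝ := fun x => max (-M) (min x M) with hT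
  have hTm : Measurable T := measurable_const.max (measurable_id.min measurable_const)
  have hTM : ∀ x, |T x| ≤ M := fun x => abs_le.2
    ⟨le_max_left _ _, max_le (by linarith) (min_le_right _ _)⟩
  have hXi1 : ∀ t ∈ S, Integrable (X t) μ := fun t ht =>
    integrable_of_integrable_abs_rpow hν ((hXm t ht).measurable hε) (hXi t ht)
  have hTi : ∀ t ∈ S, Integrable (fun ω => T (X t ω)) μ := fun t ht =>
    Integrable.of_bound (hTm.comp ((hXm t ht).measurable hε)).aestronglyMeasurable M
      (ae_of_all _ fun ω => hTM _)
  have hdi : ∀ t ∈ S, Integrable (fun ω => X t ω - T (X t ω)) μ := fun t ht =>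
    (hXi1 t ht).sub (hTi t ht)
  have htail : ∀ t ∈ S, ∫ ω, |X t ω - T (X t ω)| ∂μ ≤ η / 4 := fun t ht =>
    calc ∫ ω, |X t ω - T (X t ω)| ∂μ ≤ ∫ ω, |X t ω| ^ (1 + ν) * (M ^ ν)⁻¹ ∂μ :=
          integral_mono (hdi t ht).abs ((hXi t ht).mul_const _)
            fun ω => abs_sub_clamp_le hν hM _
      _ = (∫ ω, |X t ω| ^ (1 + ν) ∂μ) * (M ^ ν)⁻¹ := integral_mul_const _ _
      _ ≤ C * (M ^ ν)⁻¹ := by gcongr; exact hXC t ht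
      _ ≤ η / 4 := hCM
  have hmain := hW n S w (fun t ω => T (X t ω)) hw0 hwW hw1 (fun t ht => (hXm t ht).comp hTm)
    (fun t _ ω => hTM _)
  have hmaini : Integrable (fun ω => |∑ t ∈ S, w t * (T (X t ω) - ∫ ω, T (X t ω) ∂μ)|) μ :=
    (integrable_finsetSum _ fun t ht => ((hTi t ht).sub (integrable_const _)).const_mul _).abs
  have hresti' : ∀ t ∈ S, Integrable (fun ω => w t * (|X t ω - T (X t ω)| + η / 4)) μ :=
    fun t ht => ((hdi t ht).abs.add (integrable_const _)).const_mul _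
  have hresti : Integrable (fun ω => ∑ t ∈ S, w t * (|X t ω - T (X t ω)| + η / 4)) μ :=
    integrable_finsetSum _ hresti'
  calc ∫ ω, |∑ t ∈ S, w t * (X t ω - ∫ ω, X t ω ∂μ)| ∂μ
      ≤ ∫ ω, (|∑ t ∈ S, w t * (T (X t ω) - ∫ ω, T (X t ω) ∂μ)|
          + ∑ t ∈ S, w t * (|X t ω - T (X t ω)| + η / 4)) ∂μ := by
        refine integral_mono (integrable_finsetSum _ fun t ht =>
          ((hXi1 t ht).sub (integrable_const _)).const_mul _).abs (hmaini.add hresti) fun ω => ?_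
        have e : ∑ t ∈ S, w t * (X t ω - ∫ ω, X t ω ∂μ)
            = ∑ t ∈ S, w t * (T (X t ω) - ∫ ω, T (X t ω) ∂μ)
              + ∑ t ∈ S, w t * ((X t ω - T (X t ω)) - ∫ ω, (X t ω - T (X t ω)) ∂μ) := by
          rw [← Finset.sum_add_distrib]
          refine Finset.sum_congr rfl fun t ht => ?_
          rw [integral_sub (hXi1 t ht) (hTi t ht)]; ring
        show |∑ t ∈ S, w t * (X t ω - ∫ ω, X t ω ∂μ)| ≤ _
        rw [e]
        refine (abs_add_le _ _).trans (add_le_add le_rfl ?_)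
        refine (Finset.abs_sum_le_sum_abs _ _).trans (Finset.sum_le_sum fun t ht => ?_)
        rw [abs_mul, abs_of_nonneg (hw0 t ht)]
        refine mul_le_mul_of_nonneg_left ((abs_sub _ _).trans (add_le_add le_rfl ?_)) (hw0 t ht)
        exact (abs_integral_le_integral_abs).trans (htail t ht)
    _ = ∫ ω, |∑ t ∈ S, w t * (T (X t ω) - ∫ ω, T (X t ω) ∂μ)| ∂μ
          + ∑ t ∈ S, w t * (∫ ω, |X t ω - T (X t ω)| ∂μ + η / 4) := by
        rw [integral_add hmaini hresti, integral_finsetSum _ hresti']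
        congr 1
        refine Finset.sum_congr rfl fun t ht => ?_
        rw [integral_const_mul, integral_add (hdi t ht).abs (integrable_const _)]
        simp
    _ ≤ η / 2 + ∑ t ∈ S, w t * (η / 2) := by
        refine add_le_add hmain (Finset.sum_le_sum fun t ht =>
          mul_le_mul_of_nonneg_left ?_ (hw0 t ht))
        linarith [htail t ht]
    _ ≤ η := by
        rw [← Finset.sum_mul]
        nlinarith

end WeakLaw

section Deterministic

/-- `f` is Lipschitz with constant `C` on every ball around a point of `(0,1]` which does not
meet the finite set `E`, and such balls are contained in `(0,1]`. -/
def LipschitzAwayFrom (E : Finset ℝ) (C : ℝ) (f : ℝ → ℝ) : Prop :=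
  ∀ δ > 0, ∀ u ∈ Ioc (0 : ℝ) 1, (∀ e ∈ E, δ ≤ |u - e|) →
    ∀ w, |w - u| < δ → w ∈ Ioc (0 : ℝ) 1 ∧ |f w - f u| ≤ C * |w - u|

lemma LipschitzAwayFrom.mono {E E' : Finset ℝ} {C : ℝ} {f : ℝ → ℝ}
    (hf : LipschitzAwayFrom E C f) (hE : E ⊆ E') : LipschitzAwayFrom E' C f :=
  fun δ hδ u hu hE' => hf δ hδ u hu fun e he => hE' e (hE he)

lemma PiecewiseLipschitzOn01.exists_lipschitzAwayFrom {f : ℝ → ℝ}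
    (hf : PiecewiseLipschitzOn01 f) :
    ∃ (E : Finset ℝ) (C : ℝ), 0 ≤ C ∧ LipschitzAwayFrom E C f := by
  classical
  obtain ⟨p, I, C, hI, -, hU, hL⟩ := hf
  refine ⟨Finset.univ.image (fun l => sInf (I l)) ∪ Finset.univ.image (fun l => sSup (I l)),
    ((∑ l, C l : NNReal) : ℝ), NNReal.coe_nonneg _, ?_⟩
  intro δ hδ u hu hE w hw
  rw [← hU] at hu
  obtain ⟨l, hl⟩ := mem_iUnion.1 hu
  have hsub : I l ⊆ Ioc (0 : ℝ) 1 := hU ▸ subset_iUnion I l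
  have hbelow : BddBelow (I l) := ⟨0, fun x hx => (hsub hx).1.le⟩
  have habove : BddAbove (I l) := ⟨1, fun x hx => (hsub hx).2⟩
  have hne : (I l).Nonempty := ⟨u, hl⟩
  have h1 := hE (sInf (I l)) (by simp)
  have h2 := hE (sSup (I l)) (by simp)
  have h3 := csInf_le hbelow hl
  have h4 := le_csSup habove hl
  rw [abs_of_nonneg (by linarith)] at h1
  rw [abs_of_nonpos (by linarith)] at h2
  have hw' := abs_lt.1 hw
  obtain ⟨x, hx, hxw⟩ := exists_lt_of_csInf_lt hne (show sInf (I l) < w by linarith)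
  obtain ⟨y, hy, hwy⟩ := exists_lt_of_lt_csSup hne (show w < sSup (I l) by linarith)
  have hwI : w ∈ I l := (hI l).out hx hy ⟨hxw.le, hwy.le⟩
  refine ⟨hsub hwI, ?_⟩
  have := (hL l).dist_le_mul w hwI u hl
  rw [Real.dist_eq, Real.dist_eq] at this
  refine this.trans ?_
  gcongr
  exact Finset.single_le_sum (f := C) (fun _ _ => zero_le) (Finset.mem_univ l)

lemma div_mem_Ioc {n t : ℕ} (h1 : 1 ≤ t) (h2 : t ≤ n) : (t : ℝ) / n ∈ Ioc (0 : ℝ) 1 := by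
  have : (0 : ℝ) < t := by exact_mod_cast h1
  have hn : (0 : ℝ) < n := by exact_mod_cast h1.trans h2
  exact ⟨by positivity, (div_le_one hn).2 (by exact_mod_cast h2)⟩

lemma mem_Icc_of_div_mem_Ioc {n t : ℕ} (hn : 0 < n) (h : (t : ℝ) / n ∈ Ioc (0 : ℝ) 1) :
    t ∈ Finset.Icc 1 n := by
  have hn' : (0 : ℝ) < n := by exact_mod_cast hn
  have h1 : (0 : ℝ) < t := (div_pos_iff_of_pos_right hn').1 h.1
  have h2 : (t : ℝ) ≤ n := (div_le_one hn').1 h.2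
  rw [Finset.mem_Icc]
  exact ⟨by exact_mod_cast h1, by exact_mod_cast h2⟩

lemma card_filter_mem_Ioo_le (S : Finset ℕ) {x y : ℝ} (hxy : x ≤ y) :
    ((S.filter fun t : ℕ => x < (t : ℝ) ∧ (t : ℝ) < y).card : ℝ) ≤ y - x + 1 := by
  have h1 : (S.filter fun t : ℕ => x < (t : ℝ) ∧ (t : ℝ) < y).card
      ≤ (Finset.Ioo ⌊x⌋ ⌈y⌉).card := by
    refine Finset.card_le_card_of_injOn (fun t : ℕ => (t : ℤ)) (fun t ht => ?_)
      Nat.cast_injective.injOn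
    simp only [Finset.coe_filter, mem_ofPred_eq] at ht
    simp only [Finset.coe_Ioo, mem_Ioo]
    exact ⟨Int.floor_lt.2 (by exact_mod_cast ht.2.1), Int.lt_ceil.2 (by exact_mod_cast ht.2.2)⟩
  have h2 : ((Finset.Ioo ⌊x⌋ ⌈y⌉).card : ℝ) ≤ y - x + 1 := by
    rw [Int.card_Ioo]
    have hy := Int.ceil_lt_add_one y
    have hx := Int.sub_one_lt_floor x
    have h3 : (((⌈y⌉ - ⌊x⌋ - 1).toNat : ℤ) : ℝ) ≤ y - x + 1 := by
      rw [Int.toNat_eq_max]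
      push_cast
      exact max_le (by linarith) (by linarith)
    exact_mod_cast h3
  exact le_trans (by exact_mod_cast h1) h2

lemma le_card_Ioo_floor_ceil {x y : ℝ} (hx : 0 ≤ x) :
    y - x - 1 ≤ ((Finset.Ioo ⌊x⌋₊ ⌈y⌉₊).card : ℝ) := by
  rw [Nat.card_Ioo]
  have h1 := Nat.le_ceil y
  have h2 := Nat.floor_le hx
  have h3 : ((⌈y⌉₊ : ℝ) ≤ ((⌈y⌉₊ - ⌊x⌋₊ - 1 : ℕ) : ℝ) + ⌊x⌋₊ + 1) := by
    exact_mod_cast (by omega : ⌈y⌉₊ ≤ ⌈y⌉₊ - ⌊x⌋₊ - 1 + ⌊x⌋₊ + 1)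
  linarith

lemma card_filter_near_le (E : Finset ℝ) (S : Finset ℕ) {δ : ℝ} (hδ : 0 < δ) {n : ℕ}
    (hn : 0 < n) :
    ((S.filter fun t : ℕ => ¬ ∀ e ∈ E, δ ≤ |(t : ℝ) / n - e|).card : ℝ)
      ≤ E.card * (2 * δ * n + 1) := by
  classical
  have hn' : (0 : ℝ) < n := by exact_mod_cast hn
  have h1 : (S.filter fun t : ℕ => ¬ ∀ e ∈ E, δ ≤ |(t : ℝ) / n - e|)
      ⊆ E.biUnion fun e => S.filter fun t : ℕ =>
        n * (e - δ) < (t : ℝ) ∧ (t : ℝ) < n * (e + δ) := by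
    intro t ht
    simp only [Finset.mem_filter, not_forall, not_le] at ht
    obtain ⟨htS, e, he, hlt⟩ := ht
    simp only [Finset.mem_biUnion, Finset.mem_filter]
    obtain ⟨h1, h2⟩ := abs_lt.1 hlt
    refine ⟨e, he, htS, ?_, ?_⟩
    · rw [mul_comm, ← lt_div_iff₀ hn']; linarith
    · rw [mul_comm, ← div_lt_iff₀ hn']; linarith
  calc ((S.filter fun t : ℕ => ¬ ∀ e ∈ E, δ ≤ |(t : ℝ) / n - e|).card : ℝ)
      ≤ ∑ e ∈ E, ((S.filter fun t : ℕ =>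
          n * (e - δ) < (t : ℝ) ∧ (t : ℝ) < n * (e + δ)).card : ℝ) := by
        exact_mod_cast (Finset.card_le_card h1).trans Finset.card_biUnion_le
    _ ≤ ∑ _e ∈ E, (2 * δ * n + 1) := Finset.sum_le_sum fun e _ => by
        refine (card_filter_mem_Ioo_le S (by nlinarith)).trans (le_of_eq ?_)
        ring
    _ = E.card * (2 * δ * n + 1) := by rw [Finset.sum_const, nsmul_eq_mul]

/-- Averages of bounded quantities which are small away from finitely many points vanish. -/
lemma tendsto_average_of_small_away {E : Finset ℝ} {h : ℕ} {B : ℝ} {F : ℕ → ℕ → ℝ}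
    (hB : ∀ n, ∀ t ∈ Finset.Icc (h + 1) n, F n t ≤ B)
    (hF0 : ∀ n, ∀ t ∈ Finset.Icc (h + 1) n, 0 ≤ F n t)
    (hF : ∀ δ > 0, ∀ η > 0, ∀ᶠ n : ℕ in atTop, ∀ t ∈ Finset.Icc (h + 1) n,
      (∀ e ∈ E, δ ≤ |(t : ℝ) / n - e|) → F n t ≤ η) :
    Tendsto (fun n : ℕ => (n : ℝ)⁻¹ * ∑ t ∈ Finset.Icc (h + 1) n, F n t) atTop (nhds 0) := by
  have hB' : ∀ n, ∀ t ∈ Finset.Icc (h + 1) n, F n t ≤ |B| := fun n t ht =>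
    (hB n t ht).trans (le_abs_self B)
  rw [Metric.tendsto_atTop']
  intro η hη
  set A : ℝ := |B| * E.card + 1 with hA
  have hA0 : 0 < A := by positivity
  have hδ : 0 < η / (8 * A) := by positivity
  obtain ⟨N₀, hN₀⟩ := eventually_atTop.1 (hF _ hδ (η / 4) (by positivity))
  obtain ⟨N₁, hN₁⟩ := exists_nat_gt (4 * A / η)
  refine ⟨max N₀ N₁, fun n hn => ?_⟩
  have hn0 := (le_max_left N₀ N₁).trans_lt hn
  have hn1 := (le_max_right N₀ N₁).trans_lt hn
  have hnpos : 0 < n := by omega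
  have hn' : (0 : ℝ) < n := by exact_mod_cast hnpos
  have hnA : 4 * A < n * η := by
    rw [← div_lt_iff₀ hη]
    exact hN₁.trans (by exact_mod_cast hn1)
  have hs0 : 0 ≤ (n : ℝ)⁻¹ * ∑ t ∈ Finset.Icc (h + 1) n, F n t :=
    mul_nonneg (by positivity) (Finset.sum_nonneg (hF0 n))
  rw [Real.dist_eq, sub_zero, abs_of_nonneg hs0, inv_mul_lt_iff₀ hn',
    ← Finset.sum_filter_add_sum_filter_not _ fun t : ℕ => ∀ e ∈ E,
      η / (8 * A) ≤ |(t : ℝ) / n - e|]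
  have h1 : ∑ t ∈ (Finset.Icc (h + 1) n).filter (fun t : ℕ => ∀ e ∈ E,
      η / (8 * A) ≤ |(t : ℝ) / n - e|), F n t ≤ n * (η / 4) := by
    refine (Finset.sum_le_card_nsmul _ _ (η / 4) fun t ht => ?_).trans ?_
    · rw [Finset.mem_filter] at ht
      exact hN₀ n hn0.le t ht.1 ht.2
    · rw [nsmul_eq_mul]
      gcongr
      refine (Finset.card_filter_le _ _).trans ?_
      rw [Nat.card_Icc]; omega
  have h2 : ∑ t ∈ (Finset.Icc (h + 1) n).filter (fun t : ℕ => ¬ ∀ e ∈ E,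
      η / (8 * A) ≤ |(t : ℝ) / n - e|), F n t ≤ A * (2 * (η / (8 * A)) * n + 1) := by
    refine (Finset.sum_le_card_nsmul _ _ |B| fun t ht => hB' n t
      (Finset.mem_filter.1 ht).1).trans ?_
    rw [nsmul_eq_mul, mul_comm]
    refine (mul_le_mul_of_nonneg_left (card_filter_near_le E _ hδ hnpos)
      (abs_nonneg B)).trans ?_
    rw [← mul_assoc]
    gcongr
    linarith
  have h3 : A * (2 * (η / (8 * A)) * n + 1) = n * η / 4 + A := by
    field_simp; ring
  nlinarith

lemma eventually_le_average {E : Finset ℝ} {C c : ℝ} {v g : ℝ → ℝ} (hc : 0 < c)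
    (hv : LipschitzAwayFrom E C v) (hC : 0 ≤ C) (hv_pos : ∀ s ∈ Ioc (0 : ℝ) 1, 0 < v s)
    (hg : ∀ s ∈ Ioc (0 : ℝ) 1, c < g s) (h : ℕ) :
    ∃ κ > 0, ∀ᶠ n : ℕ in atTop,
      κ ≤ (n : ℝ)⁻¹ * ∑ t ∈ Finset.Icc (h + 1) n, v ((t : ℝ) / n) ^ 2 * g ((t : ℝ) / n) := by
  obtain ⟨u, hu, huE⟩ : ∃ u ∈ Ioc (0 : ℝ) 1, u ∉ E := by
    obtain ⟨u, hu⟩ := ((Ioc_infinite (zero_lt_one (α := ℝ))).sdiff E.finite_toSet).nonempty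
    exact ⟨u, hu.1, fun h => hu.2 h⟩
  obtain ⟨δ₀, hδ₀, hE⟩ : ∃ δ > 0, ∀ e ∈ E, δ ≤ |u - e| := by
    have h1 : IsOpen ((E : Set ℝ)ᶜ) := E.finite_toSet.isClosed.isOpen_compl
    obtain ⟨δ, hδ, hsub⟩ := Metric.isOpen_iff.1 h1 u huE
    refine ⟨δ, hδ, fun e he => ?_⟩
    by_contra! hlt
    exact hsub (show e ∈ Metric.ball u δ by rwa [Metric.mem_ball, dist_comm]) he
  have hvu := hv_pos u hu
  set δ := min δ₀ (v u / (2 * (C + 1))) with hδdef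
  have hδ : 0 < δ := lt_min hδ₀ (by positivity)
  have hball : ∀ w, |w - u| < δ → w ∈ Ioc (0 : ℝ) 1 ∧ v u / 2 ≤ v w := by
    intro w hw
    obtain ⟨h1, h2⟩ := hv δ₀ hδ₀ u hu hE w (hw.trans_le (min_le_left _ _))
    refine ⟨h1, ?_⟩
    have h3 : |w - u| ≤ v u / (2 * (C + 1)) := hw.le.trans (min_le_right _ _)
    have h4 : C * |w - u| ≤ v u / 2 := by
      rw [le_div_iff₀ (by positivity)] at h3
      nlinarith [abs_nonneg (w - u)]
    linarith [(abs_le.1 (h2.trans h4)).1]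
  refine ⟨δ / 2 * ((v u / 2) ^ 2 * c), by positivity, ?_⟩
  have hu1 : 0 < u - δ / 2 := (hball (u - δ / 2) (by
    rw [abs_of_nonpos (by linarith)]; linarith)).1.1
  obtain ⟨N₀, hN₀⟩ := exists_nat_gt (2 / δ)
  obtain ⟨N₁, hN₁⟩ := exists_nat_gt (h / (u - δ / 2))
  filter_upwards [eventually_ge_atTop (max N₀ N₁), eventually_gt_atTop 0] with n hn hnpos
  have hn' : (0 : ℝ) < n := by exact_mod_cast hnpos
  have hnδ : 2 < n * δ := by
    rw [← div_lt_iff₀ hδ]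
    exact hN₀.trans_le (by exact_mod_cast (le_max_left _ _).trans hn)
  have hnu : h < n * (u - δ / 2) := by
    rw [← div_lt_iff₀ hu1]
    exact hN₁.trans_le (by exact_mod_cast (le_max_right _ _).trans hn)
  set S := Finset.Ioo ⌊n * (u - δ / 2)⌋₊ ⌈n * (u + δ / 2)⌉₊ with hS
  have hx0 : 0 ≤ n * (u - δ / 2) := by positivity
  have hSmem : ∀ t ∈ S, |(t : ℝ) / n - u| < δ ∧ (h : ℝ) < t := by
    intro t ht
    rw [hS, Finset.mem_Ioo, Nat.floor_lt hx0, Nat.lt_ceil] at ht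
    refine ⟨abs_lt.2 ⟨?_, ?_⟩, hnu.trans ht.1⟩
    · have : u - δ / 2 < t / n := by rw [lt_div_iff₀ hn']; linarith
      linarith
    · have : t / n < u + δ / 2 := by rw [div_lt_iff₀ hn']; linarith
      linarith
  have hSsub : S ⊆ Finset.Icc (h + 1) n := by
    intro t ht
    obtain ⟨h1, h2⟩ := hSmem t ht
    have h3 := mem_Icc_of_div_mem_Ioc hnpos (hball _ h1).1
    rw [Finset.mem_Icc] at h3 ⊢
    exact ⟨by exact_mod_cast h2, h3.2⟩
  have hcard : n * (δ / 2) ≤ (S.card : ℝ) := by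
    have := le_card_Ioo_floor_ceil (y := n * (u + δ / 2)) hx0
    rw [← hS] at this
    nlinarith
  rw [le_inv_mul_iff₀ hn']
  calc n * (δ / 2 * ((v u / 2) ^ 2 * c)) = n * (δ / 2) * ((v u / 2) ^ 2 * c) := by ring
    _ ≤ S.card * ((v u / 2) ^ 2 * c) := by gcongr
    _ ≤ ∑ t ∈ S, v ((t : ℝ) / n) ^ 2 * g ((t : ℝ) / n) := by
        rw [← nsmul_eq_mul]
        refine Finset.card_nsmul_le_sum _ _ _ fun t ht => ?_
        obtain ⟨h1, h2⟩ := hball _ (hSmem t ht).1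
        have := hg _ h1
        gcongr
    _ ≤ _ := by
        refine Finset.sum_le_sum_of_subset_of_nonneg hSsub fun t ht _ => ?_
        rw [Finset.mem_Icc] at ht
        have := hg _ (div_mem_Ioc (by omega : 1 ≤ t) ht.2)
        exact mul_nonneg (sq_nonneg _) (hc.trans this).le

end Deterministic

section KernelWeights

variable {K : ℝ → ℝ} {b : ℕ → ℝ} {R : ℝ}

lemma tendsto_mul_bandwidth_atTop (hb_pos : ∀ n, 0 < b n) (hb0 : Tendsto b atTop (nhds 0))
    (hnb : Tendsto (fun n : ℕ => 1 / ((n : ℝ) * (b n) ^ 2)) atTop (nhds 0)) :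
    Tendsto (fun n : ℕ => (n : ℝ) * b n) atTop atTop := by
  have h1 : Tendsto (fun n : ℕ => (n : ℝ) * (b n) ^ 2) atTop atTop := by
    have h2 : Tendsto (fun n : ℕ => 1 / ((n : ℝ) * (b n) ^ 2)) atTop (nhdsWithin 0 (Ioi 0)) := by
      refine tendsto_nhdsWithin_iff.2 ⟨hnb, ?_⟩
      filter_upwards [eventually_gt_atTop 0] with n hn
      have : (0 : ℝ) < n := by exact_mod_cast hn
      have := hb_pos n
      exact mem_Ioi.2 (by positivity)
    refine h2.inv_tendsto_nhdsGT_zero.congr fun n => ?_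
    simp
  refine tendsto_atTop_mono' _ ?_ h1
  filter_upwards [hb0.eventually (ge_mem_nhds one_pos)] with n hn
  have := (hb_pos n).le
  have : b n ^ 2 ≤ b n := by nlinarith
  gcongr

lemma Kw_nonneg (hK : ∀ z, 0 ≤ K z) (n t i : ℕ) : 0 ≤ Kw K b n t i := by
  unfold Kw; split_ifs
  exacts [le_rfl, hK _]

lemma wgt_nonneg (hK : ∀ z, 0 ≤ K z) (n t j : ℕ) : 0 ≤ wgt K b n t j :=
  div_nonneg (Kw_nonneg hK n t j) (Finset.sum_nonneg fun _ _ => Kw_nonneg hK _ _ _)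

lemma sum_wgt_le_one (n t : ℕ) : ∑ j ∈ Finset.Icc 1 n, wgt K b n t j ≤ 1 := by
  unfold wgt
  rw [← Finset.sum_div]
  exact div_self_le_one _

/-- Away from the boundary the kernel normalisation is at least of order `n b`. -/
lemma exists_le_sum_Kw (hK_cont : Continuous K) (hK : ∀ z, 0 ≤ K z)
    (hK_int : ∫ z : ℝ, K z = 1) (hb_pos : ∀ n, 0 < b n) (hb0 : Tendsto b atTop (nhds 0))
    (hnb : Tendsto (fun n : ℕ => (n : ℝ) * b n) atTop atTop) :
    ∃ κ > 0, ∀ δ > 0, ∀ᶠ n : ℕ in atTop, ∀ t ∈ Finset.Icc 1 n,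
      (∀ w, |w - (t : ℝ) / n| < δ → w ∈ Ioc (0 : ℝ) 1) →
      κ * (n * b n) ≤ ∑ i ∈ Finset.Icc 1 n, Kw K b n t i := by
  obtain ⟨z₀, hz₀⟩ : ∃ z, 0 < K z := by
    by_contra! hcon
    have : K = 0 := funext fun z => le_antisymm (hcon z) (hK z)
    simp [this] at hK_int
  obtain ⟨r, hr, hKr⟩ : ∃ r > 0, ∀ z, |z - z₀| < r → K z₀ / 2 ≤ K z := by
    have := Metric.continuous_iff.1 hK_cont z₀ (K z₀ / 2) (by positivity)
    obtain ⟨r, hr, h⟩ := this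
    refine ⟨r, hr, fun z hz => ?_⟩
    have := h z hz
    rw [Real.dist_eq] at this
    linarith [(abs_lt.1 this).1]
  refine ⟨K z₀ / 2 * r, by positivity, fun δ hδ => ?_⟩
  have hb1 : ∀ᶠ n in atTop, b n * (|z₀| + r) < δ := by
    have : Tendsto (fun n => b n * (|z₀| + r)) atTop (nhds 0) := by
      simpa using hb0.mul_const (|z₀| + r)
    exact this.eventually (gt_mem_nhds hδ)
  filter_upwards [hb1, hnb.eventually_ge_atTop (2 / r), eventually_gt_atTop 0]
    with n hn1 hn2 hnpos t ht hball
  have hn' : (0 : ℝ) < n := by exact_mod_cast hnpos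
  have hbn := hb_pos n
  set N : ℝ := n * b n with hN
  have hNpos : 0 < N := by positivity
  have hNr : 2 ≤ N * r := by rwa [div_le_iff₀ hr] at hn2
  have hclose : ∀ x : ℝ, |t - x| ≤ N * (|z₀| + r) → x / n ∈ Ioc (0 : ℝ) 1 := by
    intro x hx
    refine hball _ (lt_of_le_of_lt ?_ hn1)
    rw [← sub_div, abs_div, abs_of_pos hn', div_le_iff₀ hn', abs_sub_comm]
    rw [hN] at hx
    linarith
  have hz1 := neg_abs_le z₀
  have hz2 := le_abs_self z₀
  have hx0 : 0 < t - N * (z₀ + r) := by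
    have := (hclose (t - N * (z₀ + r)) (by
      rw [sub_sub_cancel, abs_mul, abs_of_pos hNpos]
      gcongr
      exact abs_le.2 ⟨by linarith, by linarith⟩)).1
    exact (div_pos_iff_of_pos_right hn').1 this
  set S := Finset.Ioo ⌊t - N * (z₀ + r)⌋₊ ⌈t - N * (z₀ - r)⌉₊ with hS
  have hSmem : ∀ i ∈ S, |((t : ℝ) - i) / N - z₀| < r := by
    intro i hi
    rw [hS, Finset.mem_Ioo, Nat.floor_lt hx0.le, Nat.lt_ceil] at hi
    rw [abs_lt]
    constructor
    · have : z₀ - r < (t - i) / N := by rw [lt_div_iff₀ hNpos]; linarith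
      linarith
    · have : (t - i) / N < z₀ + r := by rw [div_lt_iff₀ hNpos]; linarith
      linarith
  have hSsub : S ⊆ Finset.Icc 1 n := by
    intro i hi
    refine mem_Icc_of_div_mem_Ioc hnpos (hclose _ ?_)
    obtain ⟨h1, h2⟩ := abs_lt.1 (hSmem i hi)
    have h3 : |((t : ℝ) - i) / N| ≤ |z₀| + r := abs_le.2 ⟨by linarith, by linarith⟩
    rwa [abs_div, abs_of_pos hNpos, div_le_iff₀ hNpos, mul_comm] at h3
  have hcard : N * r ≤ ((S.erase t).card : ℝ) := by
    have h1 := le_card_Ioo_floor_ceil (y := t - N * (z₀ - r)) hx0.le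
    rw [← hS] at h1
    have h2 : (S.card : ℝ) - 1 ≤ ((S.erase t).card : ℝ) := by
      have := Finset.pred_card_le_card_erase (s := S) (a := t)
      have h3 : S.card ≤ (S.erase t).card + 1 := by omega
      have h4 : (S.card : ℝ) ≤ (S.erase t).card + 1 := by exact_mod_cast h3
      linarith
    nlinarith
  calc K z₀ / 2 * r * N = N * r * (K z₀ / 2) := by ring
    _ ≤ (S.erase t).card * (K z₀ / 2) := by gcongr
    _ ≤ ∑ i ∈ S.erase t, Kw K b n t i := by
        rw [← nsmul_eq_mul]
        refine Finset.card_nsmul_le_sum _ _ _ fun i hi => ?_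
        rw [Finset.mem_erase] at hi
        rw [Kw, if_neg hi.1.symm]
        exact hKr _ (hSmem i hi.2)
    _ ≤ _ := Finset.sum_le_sum_of_subset_of_nonneg ((Finset.erase_subset _ _).trans hSsub)
        fun i _ _ => Kw_nonneg hK n t i

lemma exists_Kw_eq_zero (hK_supp : HasCompactSupport K) :
    ∃ S ≥ 0, ∀ z, S < |z| → K z = 0 := by
  obtain ⟨S, hS⟩ := hK_supp.isCompact.isBounded.exists_norm_le
  refine ⟨max S 0, le_max_right _ _, fun z hz => ?_⟩
  by_contra hne
  have := hS z (subset_tsupport K hne)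
  rw [Real.norm_eq_abs] at this
  exact absurd (hz.trans_le this) (not_lt.2 (le_max_left _ _))

/-- Bias of the kernel smoother: away from the breakpoints the weights are uniformly small and
the smoothed value of `f` is close to `f (t / n)`. -/
lemma exists_wgt_le_and_bias_le (hK_cont : Continuous K) (hK_supp : HasCompactSupport K)
    (hK : ∀ z, 0 ≤ K z) (hK_le : ∀ z, K z ≤ R) (hK_int : ∫ z : ℝ, K z = 1)
    (hb_pos : ∀ n, 0 < b n) (hb0 : Tendsto b atTop (nhds 0))
    (hnb : Tendsto (fun n : ℕ => (n : ℝ) * b n) atTop atTop)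
    {E : Finset ℝ} {C : ℝ} {f : ℝ → ℝ} (hC : 0 ≤ C) (hf : LipschitzAwayFrom E C f)
    (hf1 : ∀ s ∈ Ioc (0 : ℝ) 1, |f s| ≤ 1) (h : ℕ) {δ η : ℝ} (hδ : 0 < δ) (hη : 0 < η) :
    ∀ᶠ n : ℕ in atTop, ∀ t ∈ Finset.Icc 1 n, (∀ e ∈ E, δ ≤ |(t : ℝ) / n - e|) →
      (∀ j, wgt K b n t j ≤ η) ∧
      |∑ j ∈ Finset.Icc (h + 1) n, wgt K b n t j * f ((j : ℝ) / n) - f ((t : ℝ) / n)| ≤ η := by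
  obtain ⟨κ, hκ, hsum⟩ := exists_le_sum_Kw hK_cont hK hK_int hb_pos hb0 hnb
  obtain ⟨S, hS0, hS⟩ := exists_Kw_eq_zero hK_supp
  set η' : ℝ := η / (2 * (h + 1)) with hη'
  have hη'pos : 0 < η' := by positivity
  have e1 : ∀ᶠ n in atTop, b n * S < δ :=
    (show Tendsto (fun n => b n * S) atTop (nhds 0) by simpa using hb0.mul_const S).eventually
      (gt_mem_nhds hδ)
  have e2 : ∀ᶠ n in atTop, b n * (C * S) ≤ η / 2 :=
    (show Tendsto (fun n => b n * (C * S)) atTop (nhds 0) by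
      simpa using hb0.mul_const (C * S)).eventually (ge_mem_nhds (by positivity))
  filter_upwards [hsum δ hδ, e1, e2, hnb.eventually_ge_atTop (R / (κ * η')),
    eventually_gt_atTop 0] with n hn1 hn2 hn3 hn4 hnpos t ht htE
  have hn' : (0 : ℝ) < n := by exact_mod_cast hnpos
  have hbn := hb_pos n
  have htmem := Finset.mem_Icc.1 ht
  have hu := div_mem_Ioc htmem.1 htmem.2
  have hloc := hf δ hδ _ hu htE
  have hden := hn1 t ht fun w hw => (hloc w hw).1
  have hdenpos : 0 < ∑ i ∈ Finset.Icc 1 n, Kw K b n t i := lt_of_lt_of_le (by positivity) hden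
  have hR : 0 ≤ R := (hK 0).trans (hK_le 0)
  have hw : ∀ j, wgt K b n t j ≤ η' := by
    intro j
    rw [wgt, div_le_iff₀ hdenpos]
    have h1 : Kw K b n t j ≤ R := by
      unfold Kw; split_ifs
      exacts [hR, hK_le _]
    rw [div_le_iff₀ (by positivity)] at hn4
    calc Kw K b n t j ≤ R := h1
      _ ≤ η' * (κ * (n * b n)) := by linarith
      _ ≤ _ := by gcongr
  have hηη' : η' ≤ η := by
    rw [hη', div_le_iff₀ (by positivity)]
    nlinarith [(Nat.cast_nonneg h : (0 : ℝ) ≤ h)]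
  refine ⟨fun j => (hw j).trans hηη', ?_⟩
  have hone : ∑ j ∈ Finset.Icc 1 n, wgt K b n t j = 1 := by
    unfold wgt
    rw [← Finset.sum_div, div_self hdenpos.ne']
  have hsub : Finset.Icc (h + 1) n ⊆ Finset.Icc 1 n := Finset.Icc_subset_Icc_left (by omega)
  have hsplit := Finset.sum_sdiff (f := fun j => wgt K b n t j) hsub
  rw [hone] at hsplit
  have hrest0 : 0 ≤ ∑ j ∈ Finset.Icc 1 n \ Finset.Icc (h + 1) n, wgt K b n t j :=
    Finset.sum_nonneg fun j _ => wgt_nonneg hK n t j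
  have hrest : ∑ j ∈ Finset.Icc 1 n \ Finset.Icc (h + 1) n, wgt K b n t j ≤ η / 2 := by
    calc ∑ j ∈ Finset.Icc 1 n \ Finset.Icc (h + 1) n, wgt K b n t j
        ≤ ∑ j ∈ Finset.Icc 1 h, wgt K b n t j := by
          refine Finset.sum_le_sum_of_subset_of_nonneg (fun j hj => ?_)
            fun j _ _ => wgt_nonneg hK n t j
          simp only [Finset.mem_sdiff, Finset.mem_Icc] at hj ⊢
          omega
      _ ≤ h * η' := by
          refine (Finset.sum_le_card_nsmul _ _ η' fun j _ => hw j).trans ?_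
          simp [nsmul_eq_mul]
      _ ≤ η / 2 := by
          rw [hη', mul_div_assoc', div_le_iff₀ (by positivity)]
          nlinarith
  have hterm : ∀ j ∈ Finset.Icc (h + 1) n,
      |wgt K b n t j * (f ((j : ℝ) / n) - f ((t : ℝ) / n))| ≤ wgt K b n t j * (η / 2) := by
    intro j hj
    rw [abs_mul, abs_of_nonneg (wgt_nonneg hK n t j)]
    by_cases hfar : S < |((t : ℝ) - j) / (n * b n)|
    · have : wgt K b n t j = 0 := by
        rw [wgt, Kw, hS _ hfar]; simp
      simp [this]
    · refine mul_le_mul_of_nonneg_left ?_ (wgt_nonneg hK n t j)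
      rw [not_lt, abs_div, abs_of_pos (by positivity : 0 < (n : ℝ) * b n),
        div_le_iff₀ (by positivity)] at hfar
      have hd : |(j : ℝ) / n - t / n| ≤ b n * S := by
        rw [← sub_div, abs_div, abs_of_pos hn', div_le_iff₀ hn', abs_sub_comm]
        linarith
      refine (hloc _ (hd.trans_lt hn2)).2.trans ?_
      calc C * |(j : ℝ) / n - t / n| ≤ C * (b n * S) := by gcongr
        _ ≤ η / 2 := by linarith
  have e : ∑ j ∈ Finset.Icc (h + 1) n, wgt K b n t j * f ((j : ℝ) / n) - f ((t : ℝ) / n)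
      = ∑ j ∈ Finset.Icc (h + 1) n, wgt K b n t j * (f ((j : ℝ) / n) - f ((t : ℝ) / n))
        - (∑ j ∈ Finset.Icc 1 n \ Finset.Icc (h + 1) n, wgt K b n t j) * f ((t : ℝ) / n) := by
    simp_rw [mul_sub]
    rw [Finset.sum_sub_distrib, ← Finset.sum_mul]
    linear_combination f ((t : ℝ) / n) * hsplit
  rw [e]
  have h1 : |∑ j ∈ Finset.Icc (h + 1) n, wgt K b n t j * (f ((j : ℝ) / n) - f ((t : ℝ) / n))|
      ≤ η / 2 := by
    refine (Finset.abs_sum_le_sum_abs _ _).trans ((Finset.sum_le_sum hterm).trans ?_)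
    rw [← Finset.sum_mul]
    nlinarith
  have h2 : |(∑ j ∈ Finset.Icc 1 n \ Finset.Icc (h + 1) n, wgt K b n t j) * f ((t : ℝ) / n)|
      ≤ η / 2 := by
    rw [abs_mul, abs_of_nonneg hrest0]
    nlinarith [hf1 _ hu, abs_nonneg (f ((t : ℝ) / n))]
  linarith [abs_sub (∑ j ∈ Finset.Icc (h + 1) n,
    wgt K b n t j * (f ((j : ℝ) / n) - f ((t : ℝ) / n)))
    ((∑ j ∈ Finset.Icc 1 n \ Finset.Icc (h + 1) n, wgt K b n t j) * f ((t : ℝ) / n))]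

end KernelWeights

section Model

variable {Ω : Type*} [MeasurableSpace Ω] {μ : Measure Ω} [IsProbabilityMeasure μ]
  {ε : ℕ → ℕ → Ω → ℝ} {v : ℝ → ℝ} {g : ℕ → ℝ → ℝ} {m : ℕ} {c V C ν : ℝ}
  {K : ℝ → ℝ} {b : ℕ → ℝ} {R : ℝ}

/-- The standing assumptions on the array of returns, with explicit constants. -/
structure ReturnsModel (μ : Measure Ω) (ε : ℕ → ℕ → Ω → ℝ) (v : ℝ → ℝ) (g : ℕ → ℝ → ℝ)
    (m : ℕ) (c V C ν : ℝ) : Prop where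
  meas : ∀ n t, Measurable (ε n t)
  mixing : Tendsto (alphaMix μ ε) atTop (nhds 0)
  nu_pos : 0 < ν
  c_pos : 0 < c
  v_pos : ∀ s ∈ Ioc (0 : ℝ) 1, 0 < v s
  v_le : ∀ s ∈ Ioc (0 : ℝ) 1, v s ≤ V
  g_gt : ∀ h ≤ m, ∀ s ∈ Ioc (0 : ℝ) 1, c < g h s
  g_le : ∀ h ≤ m, ∀ s ∈ Ioc (0 : ℝ) 1, g h s ≤ 1
  prob : ∀ h ≤ m, ∀ n t : ℕ, h < t → t ≤ n →
    μ.real {ω | aproc v ε n t ω * aproc v ε n (t - h) ω = 1} = g h ((t : ℝ) / n)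
  mom : ∀ n t : ℕ, 1 ≤ t → t ≤ n → Integrable (fun ω => |ε n t ω| ^ (2 + 2 * ν)) μ
  mom_le : ∀ n t : ℕ, 1 ≤ t → t ≤ n → ∫ ω, |ε n t ω| ^ (2 + 2 * ν) ∂μ ≤ C

lemma windowMeasurable_pair {Ω : Type*} {ε : ℕ → ℕ → Ω → ℝ} (n h t : ℕ) {f : ℝ × ℝ → ℝ}
    (hf : Measurable f) :
    WindowMeasurable ε n h t fun ω => f (ε n t ω, ε n (t - h) ω) :=
  ⟨hf.comp (@Measurable.prodMk _ _ _ _ _ (_) _ _ (measurable_pastField le_rfl)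
      (measurable_pastField (Nat.sub_le t h))),
    hf.comp (@Measurable.prodMk _ _ _ _ _ (_) _ _ (measurable_futureField (Nat.sub_le t h))
      (measurable_futureField le_rfl))⟩

lemma aproc_eq_zero_or_one {Ω : Type*} (v : ℝ → ℝ) (ε : ℕ → ℕ → Ω → ℝ) (n t : ℕ) (ω : Ω) :
    aproc v ε n t ω = 0 ∨ aproc v ε n t ω = 1 := by
  unfold aproc; split_ifs <;> simp

lemma aproc_nonneg {Ω : Type*} (v : ℝ → ℝ) (ε : ℕ → ℕ → Ω → ℝ) (n t : ℕ) (ω : Ω) :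
    0 ≤ aproc v ε n t ω := by
  rcases aproc_eq_zero_or_one v ε n t ω with h | h <;> simp [h]

lemma aproc_le_one {Ω : Type*} (v : ℝ → ℝ) (ε : ℕ → ℕ → Ω → ℝ) (n t : ℕ) (ω : Ω) :
    aproc v ε n t ω ≤ 1 := by
  rcases aproc_eq_zero_or_one v ε n t ω with h | h <;> simp [h]

lemma windowMeasurable_aproc_mul {Ω : Type*} (v : ℝ → ℝ) (ε : ℕ → ℕ → Ω → ℝ) (n h t : ℕ) :
    WindowMeasurable ε n h t fun ω => aproc v ε n t ω * aproc v ε n (t - h) ω := by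
  refine windowMeasurable_pair n h t (f := fun p =>
    (if v ((t : ℝ) / n) * p.1 ≠ 0 then (1 : ℝ) else 0) *
      (if v (((t - h : ℕ) : ℝ) / n) * p.2 ≠ 0 then (1 : ℝ) else 0)) ?_
  refine Measurable.mul (Measurable.ite ?_ measurable_const measurable_const)
    (Measurable.ite ?_ measurable_const measurable_const)
  · exact (measurableSet_eq_fun (measurable_fst.const_mul _) measurable_const).compl
  · exact (measurableSet_eq_fun (measurable_snd.const_mul _) measurable_const).compl

lemma phat_eq_phat2_zero {Ω : Type*} (v : ℝ → ℝ) (ε : ℕ → ℕ → Ω → ℝ) (K : ℝ → ℝ)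
    (b : ℕ → ℝ) (n t : ℕ) (ω : Ω) : phat v ε K b n t ω = phat2 v ε K b n 0 t ω := by
  unfold phat phat2
  refine Finset.sum_congr rfl fun j _ => ?_
  rcases aproc_eq_zero_or_one v ε n j ω with h | h <;> simp [h]

lemma phat2_nonneg {Ω : Type*} {v : ℝ → ℝ} {ε : ℕ → ℕ → Ω → ℝ} {K : ℝ → ℝ} {b : ℕ → ℝ}
    (hK : ∀ z, 0 ≤ K z) (n h t : ℕ) (ω : Ω) : 0 ≤ phat2 v ε K b n h t ω :=
  Finset.sum_nonneg fun j _ => mul_nonneg (wgt_nonneg hK n t j)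
    (mul_nonneg (aproc_nonneg v ε n j ω) (aproc_nonneg v ε n (j - h) ω))

lemma phat2_le_phat {Ω : Type*} {v : ℝ → ℝ} {ε : ℕ → ℕ → Ω → ℝ} {K : ℝ → ℝ} {b : ℕ → ℝ}
    (hK : ∀ z, 0 ≤ K z) (n h t : ℕ) (ω : Ω) :
    phat2 v ε K b n h t ω ≤ phat v ε K b n t ω := by
  refine (Finset.sum_le_sum fun j _ => mul_le_mul_of_nonneg_left
    (mul_le_of_le_one_right (aproc_nonneg v ε n j ω) (aproc_le_one v ε n (j - h) ω))
    (wgt_nonneg hK n t j)).trans ?_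
  exact Finset.sum_le_sum_of_subset_of_nonneg (Finset.Icc_subset_Icc_left (by omega))
    fun j _ _ => mul_nonneg (wgt_nonneg hK n t j) (aproc_nonneg v ε n j ω)

/-- The ratio `p̂_{t,t-h} / p̂_t`, set to zero when `p̂_t = 0`. -/
noncomputable def pratio {Ω : Type*} (v : ℝ → ℝ) (ε : ℕ → ℕ → Ω → ℝ) (K : ℝ → ℝ) (b : ℕ → ℝ)
    (n h t : ℕ) (ω : Ω) : ℝ :=
  if phat v ε K b n t ω = 0 then 0 else phat2 v ε K b n h t ω / phat v ε K b n t ω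

lemma pratio_eq_div {Ω : Type*} (v : ℝ → ℝ) (ε : ℕ → ℕ → Ω → ℝ) (K : ℝ → ℝ) (b : ℕ → ℝ)
    (n h t : ℕ) (ω : Ω) :
    pratio v ε K b n h t ω = phat2 v ε K b n h t ω / phat v ε K b n t ω := by
  unfold pratio
  split_ifs with h0 <;> simp [h0]

lemma pratio_nonneg {Ω : Type*} {v : ℝ → ℝ} {ε : ℕ → ℕ → Ω → ℝ} {K : ℝ → ℝ} {b : ℕ → ℝ}
    (hK : ∀ z, 0 ≤ K z) (n h t : ℕ) (ω : Ω) : 0 ≤ pratio v ε K b n h t ω := by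
  rw [pratio_eq_div]
  exact div_nonneg (phat2_nonneg hK n h t ω)
    ((phat2_nonneg hK n h t ω).trans (phat2_le_phat hK n h t ω))

lemma pratio_le_one {Ω : Type*} {v : ℝ → ℝ} {ε : ℕ → ℕ → Ω → ℝ} {K : ℝ → ℝ} {b : ℕ → ℝ}
    (hK : ∀ z, 0 ≤ K z) (n h t : ℕ) (ω : Ω) : pratio v ε K b n h t ω ≤ 1 := by
  rw [pratio_eq_div]
  exact div_le_one_of_le₀ (phat2_le_phat hK n h t ω)
    ((phat2_nonneg hK n h t ω).trans (phat2_le_phat hK n h t ω))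

lemma pratio_mul_phat {Ω : Type*} {v : ℝ → ℝ} {ε : ℕ → ℕ → Ω → ℝ} {K : ℝ → ℝ} {b : ℕ → ℝ}
    (hK : ∀ z, 0 ≤ K z) (n h t : ℕ) (ω : Ω) :
    pratio v ε K b n h t ω * phat v ε K b n t ω = phat2 v ε K b n h t ω := by
  by_cases h0 : phat v ε K b n t ω = 0
  · have h1 := phat2_le_phat (v := v) (ε := ε) (b := b) hK n h t ω
    have h2 := phat2_nonneg (v := v) (ε := ε) (b := b) hK n h t ω
    rw [h0] at h1 ⊢
    rw [mul_zero, le_antisymm h1 h2]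
  · rw [pratio_eq_div, div_mul_cancel₀ _ h0]

lemma abs_pratio_sub_le {Ω : Type*} {v : ℝ → ℝ} {ε : ℕ → ℕ → Ω → ℝ} {K : ℝ → ℝ} {b : ℕ → ℝ}
    (hK : ∀ z, 0 ≤ K z) (n h t : ℕ) (ω : Ω) {c x y : ℝ} (hc : 0 < c) (hx : c < x) :
    |pratio v ε K b n h t ω - y / x|
      ≤ c⁻¹ * (|phat2 v ε K b n 0 t ω - x| + |phat2 v ε K b n h t ω - y|) := by
  have hx0 : 0 < x := hc.trans hx
  have h0 := pratio_nonneg (v := v) (ε := ε) (b := b) hK n h t ω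
  have h1 := pratio_le_one (v := v) (ε := ε) (b := b) hK n h t ω
  have e := pratio_mul_phat (v := v) (ε := ε) (b := b) hK n h t ω
  rw [phat_eq_phat2_zero] at e
  set q := pratio v ε K b n h t ω
  set p := phat2 v ε K b n 0 t ω
  set p' := phat2 v ε K b n h t ω
  have h2 : |q * x - y| ≤ |p - x| + |p' - y| := by
    have : q * x - y = (p' - y) - q * (p - x) := by rw [← e]; ring
    rw [this]
    refine (abs_sub _ _).trans ?_
    rw [abs_mul, abs_of_nonneg h0]
    nlinarith [abs_nonneg (p - x)]
  have h3 : q - y / x = x⁻¹ * (q * x - y) := by field_simp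
  rw [h3, abs_mul, abs_of_pos (inv_pos.2 hx0)]
  gcongr

lemma measurable_phat2 (hε : ∀ n t, Measurable (ε n t)) (n h t : ℕ) :
    Measurable (phat2 v ε K b n h t) := by
  unfold phat2
  exact Finset.measurable_fun_sum _ fun j _ =>
    ((windowMeasurable_aproc_mul v ε n h j).measurable hε).const_mul _

lemma measurable_pratio (hε : ∀ n t, Measurable (ε n t)) (n h t : ℕ) :
    Measurable (pratio v ε K b n h t) := by
  have : pratio v ε K b n h t
      = fun ω => phat2 v ε K b n h t ω / phat2 v ε K b n 0 t ω := by
    ext ω; rw [pratio_eq_div, phat_eq_phat2_zero]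
  rw [this]
  exact (measurable_phat2 hε n h t).div (measurable_phat2 hε n 0 t)

omit [IsProbabilityMeasure μ] in
/-- Unconditional expectation of a variable supported on `A` from its conditional expectation
given `A`. -/
lemma integral_eq_of_cond {A : Set Ω} {f : Ω → ℝ} {x : ℝ}
    (hf : ∀ ω, ω ∉ A → f ω = 0) (h0 : 0 < μ.real A) (h : ∫ ω, f ω ∂(μ[|A]) = x) :
    ∫ ω, f ω ∂μ = μ.real A * x := by
  rw [← h, ProbabilityTheory.cond, integral_smul_measure,
    setIntegral_eq_integral_of_forall_compl_eq_zero hf, ENNReal.toReal_inv, smul_eq_mul,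
    ← mul_assoc]
  rw [show (μ A).toReal = μ.real A from rfl, mul_inv_cancel₀ h0.ne', one_mul]

lemma abs_mul_rpow_le {ν : ℝ} (hν : 0 < ν) (x y : ℝ) :
    |x * y| ^ (1 + ν) ≤ |x| ^ (2 + 2 * ν) + |y| ^ (2 + 2 * ν) := by
  have key : ∀ x y : ℝ, |x| ≤ |y| → |x * y| ^ (1 + ν) ≤ |y| ^ (2 + 2 * ν) := by
    intro x y hxy
    have h1 : |x * y| ≤ |y| ^ (2 : ℝ) := by
      rw [abs_mul, Real.rpow_two]
      nlinarith [abs_nonneg y]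
    calc |x * y| ^ (1 + ν) ≤ (|y| ^ (2 : ℝ)) ^ (1 + ν) :=
          Real.rpow_le_rpow (abs_nonneg _) h1 (by positivity)
      _ = |y| ^ (2 + 2 * ν) := by
          rw [← Real.rpow_mul (abs_nonneg _)]; congr 1; ring
  have hx : 0 ≤ |x| ^ (2 + 2 * ν) := by positivity
  have hy : 0 ≤ |y| ^ (2 + 2 * ν) := by positivity
  rcases le_total |x| |y| with hxy | hxy
  · linarith [key x y hxy]
  · have := key y x hxy
    rw [mul_comm] at this
    linarith

namespace ReturnsModel

omit [IsProbabilityMeasure μ] in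
lemma V_pos (H : ReturnsModel μ ε v g m c V C ν) : 0 < V :=
  (H.v_pos 1 (by simp)).trans_le (H.v_le 1 (by simp))

omit [IsProbabilityMeasure μ] in
lemma integrable_rpow_mul (H : ReturnsModel μ ε v g m c V C ν) {n h t : ℕ} (ht : h < t)
    (htn : t ≤ n) (q : ℝ) :
    Integrable (fun ω => |q * (ε n t ω * ε n (t - h) ω)| ^ (1 + ν)) μ := by
  have hν := H.nu_pos
  have h1 := (H.mom n t (by omega) htn).add (H.mom n (t - h) (by omega) (by omega))
  refine (h1.const_mul (|q| ^ (1 + ν))).mono' ?_ (ae_of_all _ fun ω => ?_)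
  · have hm := ((H.meas n t).mul (H.meas n (t - h))).const_mul q
    exact ((continuous_abs.rpow_const
      (fun _ => Or.inr (by positivity))).measurable.comp hm).aestronglyMeasurable
  · rw [Real.norm_eq_abs, abs_of_nonneg (by positivity), abs_mul,
      Real.mul_rpow (abs_nonneg _) (abs_nonneg _)]
    exact mul_le_mul_of_nonneg_left (abs_mul_rpow_le hν _ _) (by positivity)

omit [IsProbabilityMeasure μ] in
lemma integral_rpow_mul_le (H : ReturnsModel μ ε v g m c V C ν) {n h t : ℕ} (ht : h < t)
    (htn : t ≤ n) {q Q : ℝ} (hq : |q| ≤ Q) :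
    ∫ ω, |q * (ε n t ω * ε n (t - h) ω)| ^ (1 + ν) ∂μ ≤ Q ^ (1 + ν) * (2 * C) := by
  have hν := H.nu_pos
  have i1 := H.mom n t (by omega) htn
  have i2 := H.mom n (t - h) (by omega) (by omega)
  calc ∫ ω, |q * (ε n t ω * ε n (t - h) ω)| ^ (1 + ν) ∂μ
      ≤ ∫ ω, Q ^ (1 + ν) * (|ε n t ω| ^ (2 + 2 * ν) + |ε n (t - h) ω| ^ (2 + 2 * ν)) ∂μ := by
        refine integral_mono (H.integrable_rpow_mul ht htn q) ((i1.add i2).const_mul _)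
          fun ω => ?_
        show |q * (ε n t ω * ε n (t - h) ω)| ^ (1 + ν) ≤ _
        rw [abs_mul, Real.mul_rpow (abs_nonneg _) (abs_nonneg _)]
        exact mul_le_mul (Real.rpow_le_rpow (abs_nonneg _) hq (by positivity))
          (abs_mul_rpow_le hν _ _) (by positivity)
          (Real.rpow_nonneg ((abs_nonneg _).trans hq) _)
    _ = Q ^ (1 + ν) * (∫ ω, |ε n t ω| ^ (2 + 2 * ν) ∂μ
          + ∫ ω, |ε n (t - h) ω| ^ (2 + 2 * ν) ∂μ) := by
        rw [integral_const_mul, integral_add i1 i2]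
    _ ≤ Q ^ (1 + ν) * (2 * C) := by
        refine mul_le_mul_of_nonneg_left ?_ (Real.rpow_nonneg ((abs_nonneg _).trans hq) _)
        linarith [H.mom_le n t (by omega) htn, H.mom_le n (t - h) (by omega) (by omega)]

lemma integrable_mul (H : ReturnsModel μ ε v g m c V C ν) {n h t : ℕ} (ht : h < t)
    (htn : t ≤ n) : Integrable (fun ω => ε n t ω * ε n (t - h) ω) μ := by
  refine integrable_of_integrable_abs_rpow H.nu_pos ((H.meas n t).mul (H.meas n (t - h))) ?_
  simpa using H.integrable_rpow_mul ht htn 1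

omit [IsProbabilityMeasure μ] in
lemma measurableSet_aproc_mul (H : ReturnsModel μ ε v g m c V C ν) (n h t : ℕ) :
    MeasurableSet {ω | aproc v ε n t ω * aproc v ε n (t - h) ω = 1} :=
  ((windowMeasurable_aproc_mul v ε n h t).measurable H.meas) (measurableSet_singleton 1)

omit [IsProbabilityMeasure μ] in
lemma integral_aproc_mul (H : ReturnsModel μ ε v g m c V C ν) {n h t : ℕ} (hm : h ≤ m)
    (ht : h < t) (htn : t ≤ n) :
    ∫ ω, aproc v ε n t ω * aproc v ε n (t - h) ω ∂μ = g h ((t : ℝ) / n) := by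
  rw [← H.prob h hm n t ht htn, ← integral_indicator_one (H.measurableSet_aproc_mul n h t)]
  congr 1
  ext ω
  rcases aproc_eq_zero_or_one v ε n t ω with h1 | h1 <;>
    rcases aproc_eq_zero_or_one v ε n (t - h) ω with h2 | h2 <;>
    simp [indicator, h1, h2]

omit [IsProbabilityMeasure μ] in
/-- Lagged second moments from the conditional ones. -/
lemma integral_mul_eq (H : ReturnsModel μ ε v g m c V C ν) {n h t : ℕ} (hm : h ≤ m)
    (ht : h < t) (htn : t ≤ n) {ρ : ℝ}
    (hρ : ∫ ω, ε n t ω * ε n (t - h) ω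
      ∂(μ[|{ω | aproc v ε n t ω * aproc v ε n (t - h) ω = 1}]) = ρ) :
    ∫ ω, ε n t ω * ε n (t - h) ω ∂μ = g h ((t : ℝ) / n) * ρ := by
  have hu := div_mem_Ioc (by omega : 1 ≤ t) htn
  have hu' := div_mem_Ioc (by omega : 1 ≤ t - h) (by omega : t - h ≤ n)
  rw [← H.prob h hm n t ht htn]
  refine integral_eq_of_cond (fun ω hω => ?_) ?_ hρ
  · by_contra hne
    obtain ⟨h1, h2⟩ := mul_ne_zero_iff.1 hne
    apply hω
    have e1 : aproc v ε n t ω = 1 := if_pos (mul_ne_zero (H.v_pos _ hu).ne' h1)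
    have e2 : aproc v ε n (t - h) ω = 1 := if_pos (mul_ne_zero (H.v_pos _ hu').ne' h2)
    simp [e1, e2]
  · rw [H.prob h hm n t ht htn]
    exact H.c_pos.trans (H.g_gt h hm _ hu)

/-- Weak law for weighted averages of the lagged products `ε_t ε_{t-k}`. -/
lemma tendsto_average_mul (H : ReturnsModel μ ε v g m c V C ν) {k h : ℕ} (hk : k ≤ h)
    {f : ℝ → ℝ} {Q : ℝ} {q : ℕ → ℕ → ℝ}
    (hq : ∀ n, ∀ t ∈ Finset.Icc (h + 1) n, |q n t| ≤ Q)
    (hE : ∀ n, ∀ t ∈ Finset.Icc (h + 1) n, ∫ ω, ε n t ω * ε n (t - k) ω ∂μ = f ((t : ℝ) / n)) :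
    Tendsto (fun n : ℕ => ∫ ω, |(n : ℝ)⁻¹ * ∑ t ∈ Finset.Icc (h + 1) n,
        q n t * (ε n t ω * ε n (t - k) ω)
      - (n : ℝ)⁻¹ * ∑ t ∈ Finset.Icc (h + 1) n, q n t * f ((t : ℝ) / n)| ∂μ)
      atTop (nhds 0) := by
  refine Metric.tendsto_atTop.2 fun η hη => ?_
  obtain ⟨W₀, hW₀, hW⟩ := exists_weight_bound (μ := μ) (C := Q ^ (1 + ν) * (2 * C)) H.meas
    H.mixing k H.nu_pos (show 0 < η / 2 by positivity)
  obtain ⟨N, hN⟩ := exists_nat_gt W₀⁻¹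
  refine ⟨max N 1, fun n hn => ?_⟩
  have hn1 : 1 ≤ n := (le_max_right _ _).trans hn
  have hn' : (0 : ℝ) < n := by exact_mod_cast hn1
  have hnW : (n : ℝ)⁻¹ ≤ W₀ := inv_le_of_inv_le₀ hW₀
    (hN.le.trans (by exact_mod_cast (le_max_left _ _).trans hn))
  have key := hW n (Finset.Icc (h + 1) n) (fun _ => (n : ℝ)⁻¹)
    (fun t ω => q n t * (ε n t ω * ε n (t - k) ω)) (fun _ _ => by positivity) (fun _ _ => hnW)
    ?_ ?_ ?_ ?_
  · rw [Real.dist_eq, sub_zero, abs_of_nonneg (integral_nonneg fun ω => abs_nonneg _)]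
    refine lt_of_le_of_lt (le_of_eq_of_le ?_ key) (by linarith)
    congr 1
    ext ω
    congr 1
    rw [← mul_sub, ← Finset.sum_sub_distrib, Finset.mul_sum]
    refine Finset.sum_congr rfl fun t ht => ?_
    rw [integral_const_mul, hE n t ht]
  · rw [Finset.sum_const, nsmul_eq_mul, Nat.card_Icc, ← div_eq_mul_inv, div_le_one hn']
    exact_mod_cast (by omega : n + 1 - (h + 1) ≤ n)
  · intro t _
    exact windowMeasurable_pair n k t ((measurable_fst.mul measurable_snd).const_mul (q n t))
  · intro t ht
    rw [Finset.mem_Icc] at ht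
    exact H.integrable_rpow_mul (by omega) ht.2 _
  · intro t ht
    have hq' := hq n t ht
    rw [Finset.mem_Icc] at ht
    exact H.integral_rpow_mul_le (by omega) ht.2 hq'

end ReturnsModel

end Model

section Consistency

variable {Ω : Type*} [MeasurableSpace Ω] {μ : Measure Ω} [IsProbabilityMeasure μ]
  {ε : ℕ → ℕ → Ω → ℝ} {v : ℝ → ℝ} {g : ℕ → ℝ → ℝ} {m : ℕ} {c V C ν : ℝ}
  {K : ℝ → ℝ} {b : ℕ → ℝ} {R : ℝ}

/-- The kernel and bandwidth conditions used for consistency. -/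
structure KernelBandwidth (K : ℝ → ℝ) (R : ℝ) (b : ℕ → ℝ) : Prop where
  cont : Continuous K
  supp : HasCompactSupport K
  nonneg : ∀ z, 0 ≤ K z
  le : ∀ z, K z ≤ R
  int : ∫ z : ℝ, K z = 1
  b_pos : ∀ n, 0 < b n
  b_zero : Tendsto b atTop (nhds 0)
  nb : Tendsto (fun n : ℕ => (n : ℝ) * b n) atTop atTop

omit [MeasurableSpace Ω] in
lemma phat2_le_one (hK : ∀ z, 0 ≤ K z) (n h t : ℕ) (ω : Ω) : phat2 v ε K b n h t ω ≤ 1 := by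
  refine (phat2_le_phat hK n h t ω).trans ((Finset.sum_le_sum fun j _ => ?_).trans
    (sum_wgt_le_one (K := K) (b := b) n t))
  exact mul_le_of_le_one_right (wgt_nonneg hK n t j) (aproc_le_one v ε n j ω)

lemma integrable_phat2 (hε : ∀ n t, Measurable (ε n t)) (hK : ∀ z, 0 ≤ K z) (n h t : ℕ) :
    Integrable (phat2 v ε K b n h t) μ := by
  refine Integrable.of_bound (measurable_phat2 hε n h t).aestronglyMeasurable 1
    (ae_of_all _ fun ω => ?_)
  rw [Real.norm_eq_abs, abs_of_nonneg (phat2_nonneg hK n h t ω)]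
  exact phat2_le_one hK n h t ω

lemma integrable_pratio (hε : ∀ n t, Measurable (ε n t)) (hK : ∀ z, 0 ≤ K z) (n h t : ℕ) :
    Integrable (pratio v ε K b n h t) μ := by
  refine Integrable.of_bound (measurable_pratio hε n h t).aestronglyMeasurable 1
    (ae_of_all _ fun ω => ?_)
  rw [Real.norm_eq_abs, abs_of_nonneg (pratio_nonneg hK n h t ω)]
  exact pratio_le_one hK n h t ω

omit [IsProbabilityMeasure μ] in
lemma tendsto_integral_abs_sub_trans {X Y Z : ℕ → Ω → ℝ} (hX : ∀ n, Integrable (X n) μ)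
    (hY : ∀ n, Integrable (Y n) μ) (hZ : ∀ n, Integrable (Z n) μ)
    (hXY : Tendsto (fun n => ∫ ω, |X n ω - Y n ω| ∂μ) atTop (nhds 0))
    (hYZ : Tendsto (fun n => ∫ ω, |Y n ω - Z n ω| ∂μ) atTop (nhds 0)) :
    Tendsto (fun n => ∫ ω, |X n ω - Z n ω| ∂μ) atTop (nhds 0) := by
  refine squeeze_zero (fun n => integral_nonneg fun ω => abs_nonneg _) (fun n => ?_)
    (by simpa using hXY.add hYZ)
  have h1 : Integrable (fun ω => |X n ω - Y n ω|) μ := ((hX n).sub (hY n)).abs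
  have h2 : Integrable (fun ω => |Y n ω - Z n ω|) μ := ((hY n).sub (hZ n)).abs
  rw [← integral_add h1 h2]
  exact integral_mono ((hX n).sub (hZ n)).abs (h1.add h2) fun ω => abs_sub_le _ _ _

lemma tendsto_measureReal_of_tendsto_integral {X : ℕ → Ω → ℝ} {x : ℕ → ℝ}
    (hX : ∀ n, Integrable (X n) μ)
    (h : Tendsto (fun n => ∫ ω, |X n ω - x n| ∂μ) atTop (nhds 0)) {η : ℝ} (hη : 0 < η) :
    Tendsto (fun n => μ.real {ω | η ≤ |X n ω - x n|}) atTop (nhds 0) := by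
  refine squeeze_zero (fun n => measureReal_nonneg) (fun n => ?_)
    (by simpa using h.const_mul η⁻¹)
  have := mul_meas_ge_le_integral_of_nonneg (ae_of_all μ fun ω => abs_nonneg (X n ω - x n))
    ((hX n).sub (integrable_const (x n))).abs η
  rw [inv_mul_eq_div, le_div_iff₀ hη, mul_comm]
  exact this

/-- Stability of the ratio `p N / D` around `ρ`. -/
lemma exists_ratio_tolerance (ρ : ℝ) {κ η : ℝ} (hκ : 0 < κ) (hη : 0 < η) :
    ∃ τ > 0, ∀ N D s p : ℝ, κ ≤ s → |N - ρ * s| < τ → |D - s| < τ → |p - 1| < τ →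
      |p * N / D - ρ| < η := by
  set A : ℝ := 4 / κ + 2 * |ρ| / κ + 2 * |ρ| with hA
  have hA0 : 0 < A := by positivity
  refine ⟨min (κ / 2) (min 1 (η / A)), by positivity, ?_⟩
  intro N D s p hs hN hD hp
  set τ := min (κ / 2) (min 1 (η / A)) with hτ
  have t1 : τ ≤ κ / 2 := min_le_left _ _
  have t2 : τ ≤ 1 := (min_le_right _ _).trans (min_le_left _ _)
  have t3 : τ * A ≤ η :=
    (le_div_iff₀ hA0).1 ((min_le_right _ _).trans (min_le_right _ _))
  have hτ0 : 0 < τ := by positivity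
  have hDs : s / 2 ≤ D := by have := (abs_lt.1 hD).1; linarith
  have hD0 : 0 < D := by linarith
  have hDκ : κ / 2 ≤ D := by linarith
  have hp2 : |p| < 2 := by
    have h1 := abs_lt.1 hp
    exact abs_lt.2 ⟨by linarith, by linarith⟩
  have e : p * N / D - ρ = (p * (N - ρ * s) + (p - 1) * (ρ * s) - ρ * (D - s)) / D := by
    field_simp; ring
  rw [e, abs_div, abs_of_pos hD0, div_lt_iff₀ hD0]
  have b1 : |p * (N - ρ * s)| < 2 * τ := by
    rw [abs_mul]
    exact mul_lt_mul'' hp2 hN (abs_nonneg _) (abs_nonneg _)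
  have b2 : |(p - 1) * (ρ * s)| ≤ τ * (|ρ| * s) := by
    rw [abs_mul, abs_mul, abs_of_pos (hκ.trans_le hs)]
    exact mul_le_mul_of_nonneg_right hp.le (mul_nonneg (abs_nonneg _) (hκ.le.trans hs))
  have b3 : |ρ * (D - s)| ≤ |ρ| * τ := by
    rw [abs_mul]; gcongr
  have b4 : 2 * τ + τ * (|ρ| * s) + |ρ| * τ ≤ τ * A * D := by
    have c1 : 2 ≤ 4 / κ * D := by
      rw [div_mul_eq_mul_div, le_div_iff₀ hκ]; linarith
    have c2 : |ρ| ≤ 2 * |ρ| / κ * D := by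
      rw [div_mul_eq_mul_div, le_div_iff₀ hκ]; nlinarith [abs_nonneg ρ]
    have c3 : |ρ| * s ≤ 2 * |ρ| * D := by nlinarith [abs_nonneg ρ]
    have : 2 + |ρ| * s + |ρ| ≤ A * D := by rw [hA, add_mul, add_mul]; linarith
    nlinarith
  calc _ ≤ |p * (N - ρ * s)| + |(p - 1) * (ρ * s)| + |ρ * (D - s)| :=
        (abs_sub _ _).trans (by gcongr; exact abs_add_le _ _)
    _ < 2 * τ + τ * (|ρ| * s) + |ρ| * τ := by linarith
    _ ≤ τ * A * D := b4
    _ ≤ η * D := by gcongr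

namespace ReturnsModel

/-- Consistency in mean of the kernel estimators of `P(a_t a_{t-k} = 1)`, uniformly away from the
break points. -/
lemma eventually_integral_phat2_sub_le (H : ReturnsModel μ ε v g m c V C ν)
    (HK : KernelBandwidth K R b) {k : ℕ} (hk : k ≤ m) {E : Finset ℝ} {L : ℝ} (hL : 0 ≤ L)
    (hg : LipschitzAwayFrom E L (g k)) {δ η : ℝ} (hδ : 0 < δ) (hη : 0 < η) :
    ∀ᶠ n : ℕ in atTop, ∀ t ∈ Finset.Icc 1 n, (∀ e ∈ E, δ ≤ |(t : ℝ) / n - e|) →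
      ∫ ω, |phat2 v ε K b n k t ω - g k ((t : ℝ) / n)| ∂μ ≤ η := by
  obtain ⟨W₀, hW₀, hW⟩ := exists_weight_bound_of_bounded (μ := μ) H.meas H.mixing k one_pos
    (show 0 < η / 2 by positivity)
  have hg1 : ∀ s ∈ Ioc (0 : ℝ) 1, |g k s| ≤ 1 := fun s hs => by
    rw [abs_of_pos (H.c_pos.trans (H.g_gt k hk s hs))]
    exact H.g_le k hk s hs
  filter_upwards [exists_wgt_le_and_bias_le HK.cont HK.supp HK.nonneg HK.le HK.int HK.b_pos
    HK.b_zero HK.nb hL hg hg1 k hδ (show 0 < min (η / 2) W₀ by positivity)] with n hn t ht hE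
  obtain ⟨hw, hbias⟩ := hn t ht hE
  set β := ∑ j ∈ Finset.Icc (k + 1) n, wgt K b n t j * g k ((j : ℝ) / n) with hβ
  have key := hW n (Finset.Icc (k + 1) n) (wgt K b n t)
    (fun j ω => aproc v ε n j ω * aproc v ε n (j - k) ω) (fun j _ => wgt_nonneg HK.nonneg n t j)
    (fun j _ => (hw j).trans (min_le_right _ _))
    ((Finset.sum_le_sum_of_subset_of_nonneg (Finset.Icc_subset_Icc_left (by omega))
      fun j _ _ => wgt_nonneg HK.nonneg n t j).trans (sum_wgt_le_one n t))
    (fun j _ => windowMeasurable_aproc_mul v ε n k j) (fun j _ ω => by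
      rw [abs_of_nonneg (mul_nonneg (aproc_nonneg v ε n j ω) (aproc_nonneg v ε n (j - k) ω))]
      exact mul_le_one₀ (aproc_le_one v ε n j ω) (aproc_nonneg v ε n (j - k) ω)
        (aproc_le_one v ε n (j - k) ω))
  have hsum : ∀ ω, ∑ j ∈ Finset.Icc (k + 1) n, wgt K b n t j *
      (aproc v ε n j ω * aproc v ε n (j - k) ω
        - ∫ ω, aproc v ε n j ω * aproc v ε n (j - k) ω ∂μ) = phat2 v ε K b n k t ω - β := by
    intro ω
    rw [phat2, hβ, ← Finset.sum_sub_distrib]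
    refine Finset.sum_congr rfl fun j hj => ?_
    rw [Finset.mem_Icc] at hj
    rw [H.integral_aproc_mul hk (by omega) hj.2, mul_sub]
  simp only [hsum] at key
  have hi : Integrable (phat2 v ε K b n k t) μ := integrable_phat2 H.meas HK.nonneg n k t
  have hi1 : Integrable (fun ω => |phat2 v ε K b n k t ω - β|) μ :=
    (hi.sub (integrable_const β)).abs
  calc ∫ ω, |phat2 v ε K b n k t ω - g k ((t : ℝ) / n)| ∂μ
      ≤ ∫ ω, (|phat2 v ε K b n k t ω - β| + |β - g k ((t : ℝ) / n)|) ∂μ :=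
        integral_mono (hi.sub (integrable_const _)).abs (hi1.add (integrable_const _))
          fun ω => abs_sub_le _ _ _
    _ = ∫ ω, |phat2 v ε K b n k t ω - β| ∂μ + |β - g k ((t : ℝ) / n)| := by
        rw [integral_add hi1 (integrable_const _)]; simp
    _ ≤ η / 2 + η / 2 := add_le_add key (hbias.trans (min_le_left _ _))
    _ = η := by ring

lemma integrable_sq_mul (H : ReturnsModel μ ε v g m c V C ν) {n t : ℕ} (ht : 1 ≤ t)
    (htn : t ≤ n) {D : Ω → ℝ} (hD : Measurable D) {B : ℝ} (hDB : ∀ ω, |D ω| ≤ B) :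
    Integrable (fun ω => rproc v ε n t ω ^ 2 * D ω) μ := by
  have h1 := ((H.integrable_mul (h := 0) (by omega) htn).const_mul (v ((t : ℝ) / n) ^ 2)).mul_bdd
    (c := B) hD.aestronglyMeasurable (ae_of_all _ hDB)
  refine h1.congr (ae_of_all _ fun ω => ?_)
  simp only [rproc, Nat.sub_zero]
  ring

/-- Truncation bound for the mean of `r_t²` against a bounded nonnegative variable. -/
lemma integral_sq_mul_le (H : ReturnsModel μ ε v g m c V C ν) {n t : ℕ} (ht : 1 ≤ t)
    (htn : t ≤ n) {D : Ω → ℝ} (hD : Measurable D) {B : ℝ} (hD0 : ∀ ω, 0 ≤ D ω)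
    (hDB : ∀ ω, D ω ≤ B) {M : ℝ} (hM : 0 < M) :
    ∫ ω, rproc v ε n t ω ^ 2 * D ω ∂μ
      ≤ V ^ 2 * (M * ∫ ω, D ω ∂μ + B * (2 * C) * (M ^ ν)⁻¹) := by
  have hν := H.nu_pos
  have hu := div_mem_Ioc ht htn
  have hMν : 0 ≤ (M ^ ν)⁻¹ := by positivity
  have hV : v ((t : ℝ) / n) ^ 2 ≤ V ^ 2 := by
    have := H.v_le _ hu
    have := (H.v_pos _ hu).le
    gcongr
  have hB : 0 ≤ B := by
    obtain ⟨ω⟩ : Nonempty Ω := nonempty_of_isProbabilityMeasure μ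
    exact (hD0 ω).trans (hDB ω)
  have hi := H.integrable_rpow_mul (h := 0) (by omega : 0 < t) htn 1
  have hil := H.integral_rpow_mul_le (h := 0) (by omega : 0 < t) htn (q := 1) (Q := 1) (by simp)
  simp only [one_mul, Nat.sub_zero, Real.one_rpow] at hi hil
  have hDi : Integrable D μ := Integrable.of_bound hD.aestronglyMeasurable B
    (ae_of_all _ fun ω => by rw [Real.norm_eq_abs, abs_of_nonneg (hD0 ω)]; exact hDB ω)
  have hi1 := hDi.const_mul M
  have hi2 := hi.const_mul (B * (M ^ ν)⁻¹)
  calc ∫ ω, rproc v ε n t ω ^ 2 * D ω ∂μ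
      ≤ ∫ ω, V ^ 2 * (M * D ω + B * (M ^ ν)⁻¹ * |ε n t ω * ε n t ω| ^ (1 + ν)) ∂μ := by
        refine integral_mono (H.integrable_sq_mul ht htn hD (B := B) fun ω => by
          rw [abs_of_nonneg (hD0 ω)]; exact hDB ω) ((hi1.add hi2).const_mul _) fun ω => ?_
        have h1 := le_add_rpow_mul_inv hν hM (abs_nonneg (ε n t ω * ε n t ω))
        set x := |ε n t ω * ε n t ω| ^ (1 + ν) with hx
        have hx0 : 0 ≤ x := by positivity
        have h2 : ε n t ω ^ 2 ≤ M + x * (M ^ ν)⁻¹ := by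
          rw [sq]; exact (le_abs_self _).trans h1
        show (v ((t : ℝ) / n) * ε n t ω) ^ 2 * D ω ≤ V ^ 2 * (M * D ω + B * (M ^ ν)⁻¹ * x)
        calc (v ((t : ℝ) / n) * ε n t ω) ^ 2 * D ω
            = v ((t : ℝ) / n) ^ 2 * (ε n t ω ^ 2 * D ω) := by ring
          _ ≤ V ^ 2 * ((M + x * (M ^ ν)⁻¹) * D ω) := by
              have := hD0 ω
              gcongr
          _ = V ^ 2 * (M * D ω + D ω * ((M ^ ν)⁻¹ * x)) := by ring
          _ ≤ V ^ 2 * (M * D ω + B * ((M ^ ν)⁻¹ * x)) := by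
              gcongr; exact hDB ω
          _ = _ := by ring
    _ = V ^ 2 * (M * ∫ ω, D ω ∂μ
          + B * (M ^ ν)⁻¹ * ∫ ω, |ε n t ω * ε n t ω| ^ (1 + ν) ∂μ) := by
        rw [integral_const_mul, integral_add hi1 hi2, integral_const_mul, integral_const_mul]
    _ ≤ V ^ 2 * (M * ∫ ω, D ω ∂μ + B * (M ^ ν)⁻¹ * (2 * C)) := by gcongr
    _ = _ := by ring

/-- The estimated ratios may be replaced by the true ones in the average of `r_t²`. -/
lemma tendsto_integral_average_pratio (H : ReturnsModel μ ε v g m c V C ν)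
    (HK : KernelBandwidth K R b) {h : ℕ} (hm : h ≤ m) {E : Finset ℝ} {L₀ L : ℝ} (hL₀ : 0 ≤ L₀)
    (hL : 0 ≤ L) (hg₀ : LipschitzAwayFrom E L₀ (g 0)) (hg : LipschitzAwayFrom E L (g h)) :
    Tendsto (fun n : ℕ => ∫ ω, |(n : ℝ)⁻¹ * ∑ t ∈ Finset.Icc (h + 1) n,
        rproc v ε n t ω ^ 2 * pratio v ε K b n h t ω
      - (n : ℝ)⁻¹ * ∑ t ∈ Finset.Icc (h + 1) n,
        rproc v ε n t ω ^ 2 * (g h ((t : ℝ) / n) / g 0 ((t : ℝ) / n))| ∂μ) atTop (nhds 0) := by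
  have hc := H.c_pos
  have hν := H.nu_pos
  have hV := H.V_pos
  set D : ℕ → ℕ → Ω → ℝ := fun n t ω =>
    |pratio v ε K b n h t ω - g h ((t : ℝ) / n) / g 0 ((t : ℝ) / n)| with hDdef
  have hDm : ∀ n t, Measurable (D n t) := fun n t =>
    ((measurable_pratio H.meas n h t).sub measurable_const).abs
  have hD0 : ∀ n t ω, 0 ≤ D n t ω := fun n t ω => abs_nonneg _
  set B : ℝ := 1 + c⁻¹ with hBdef
  have hB0 : 0 < B := by positivity
  have hDB : ∀ n, ∀ t ∈ Finset.Icc (h + 1) n, ∀ ω, D n t ω ≤ B := by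
    intro n t ht ω
    rw [Finset.mem_Icc] at ht
    have hu := div_mem_Ioc (by omega : 1 ≤ t) ht.2
    have h1 := pratio_nonneg (v := v) (ε := ε) (b := b) HK.nonneg n h t ω
    have h2 := pratio_le_one (v := v) (ε := ε) (b := b) HK.nonneg n h t ω
    have h0 := hc.trans (H.g_gt 0 (Nat.zero_le _) _ hu)
    have h3 : g h ((t : ℝ) / n) / g 0 ((t : ℝ) / n) ≤ c⁻¹ := by
      rw [div_le_iff₀ h0, inv_mul_eq_div, le_div_iff₀ hc]
      have := H.g_gt 0 (Nat.zero_le _) _ hu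
      have := H.g_le h hm _ hu
      nlinarith
    have h4 : 0 ≤ g h ((t : ℝ) / n) / g 0 ((t : ℝ) / n) :=
      div_nonneg (hc.trans (H.g_gt h hm _ hu)).le h0.le
    exact abs_le.2 ⟨by linarith, by linarith⟩
  have hDi : ∀ n t, Integrable (D n t) μ := fun n t =>
    ((integrable_pratio H.meas HK.nonneg n h t).sub (integrable_const _)).abs
  have hav : Tendsto (fun n : ℕ => (n : ℝ)⁻¹ * ∑ t ∈ Finset.Icc (h + 1) n,
      ∫ ω, rproc v ε n t ω ^ 2 * D n t ω ∂μ) atTop (nhds 0) := by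
    refine tendsto_average_of_small_away (E := E)
      (B := V ^ 2 * (1 * B + B * (2 * C) * ((1 : ℝ) ^ ν)⁻¹)) ?_ ?_ ?_
    · intro n t ht
      have hb := hDB n t ht
      rw [Finset.mem_Icc] at ht
      refine (H.integral_sq_mul_le (by omega) ht.2 (hDm n t) (hD0 n t) hb one_pos).trans ?_
      have : ∫ ω, D n t ω ∂μ ≤ B := by
        have := integral_mono (hDi n t) (integrable_const B) hb
        simpa using this
      gcongr
    · intro n t _
      exact integral_nonneg fun ω => mul_nonneg (sq_nonneg _) (hD0 n t ω)
    · intro δ hδ η hη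
      obtain ⟨M, hM, hMη⟩ := exists_mul_inv_rpow_le (C := B * (2 * C)) hν
        (show 0 < η / (2 * V ^ 2) by positivity)
      set τ : ℝ := η * c / (4 * V ^ 2 * M) with hτ
      have hτ0 : 0 < τ := by positivity
      filter_upwards [H.eventually_integral_phat2_sub_le HK (Nat.zero_le m) hL₀ hg₀ hδ hτ0,
        H.eventually_integral_phat2_sub_le HK hm hL hg hδ hτ0] with n h1 h2 t ht hE
      have hb := hDB n t ht
      rw [Finset.mem_Icc] at ht
      have ht' : t ∈ Finset.Icc 1 n := Finset.mem_Icc.2 ⟨by omega, ht.2⟩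
      have hu := div_mem_Ioc (by omega : 1 ≤ t) ht.2
      have k1 := h1 t ht' hE
      have k2 := h2 t ht' hE
      have i1 : Integrable (fun ω => |phat2 v ε K b n 0 t ω - g 0 ((t : ℝ) / n)|) μ :=
        ((integrable_phat2 H.meas HK.nonneg n 0 t).sub (integrable_const _)).abs
      have i2 : Integrable (fun ω => |phat2 v ε K b n h t ω - g h ((t : ℝ) / n)|) μ :=
        ((integrable_phat2 H.meas HK.nonneg n h t).sub (integrable_const _)).abs
      have hDle : ∫ ω, D n t ω ∂μ ≤ c⁻¹ * (τ + τ) := by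
        refine (integral_mono (hDi n t) ((i1.add i2).const_mul c⁻¹) fun ω =>
          abs_pratio_sub_le HK.nonneg n h t ω hc (H.g_gt 0 (Nat.zero_le _) _ hu)).trans ?_
        simp only [Pi.add_apply]
        rw [integral_const_mul, integral_add i1 i2]
        gcongr
      calc ∫ ω, rproc v ε n t ω ^ 2 * D n t ω ∂μ
          ≤ V ^ 2 * (M * ∫ ω, D n t ω ∂μ + B * (2 * C) * (M ^ ν)⁻¹) :=
            H.integral_sq_mul_le (by omega) ht.2 (hDm n t) (hD0 n t) hb hM
        _ ≤ V ^ 2 * (M * (c⁻¹ * (τ + τ)) + η / (2 * V ^ 2)) := by gcongr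
        _ = η := by rw [hτ]; field_simp; ring
  refine squeeze_zero (fun n => integral_nonneg fun ω => abs_nonneg _) (fun n => ?_) hav
  have hri : ∀ t ∈ Finset.Icc (h + 1) n,
      Integrable (fun ω => rproc v ε n t ω ^ 2 * D n t ω) μ := fun t ht => by
    have hb := hDB n t ht
    rw [Finset.mem_Icc] at ht
    exact H.integrable_sq_mul (by omega) ht.2 (hDm n t) (B := B) fun ω => by
      rw [abs_of_nonneg (hD0 n t ω)]; exact hb ω
  rw [← integral_finsetSum _ hri, ← integral_const_mul]
  refine integral_mono_of_nonneg (ae_of_all _ fun ω => abs_nonneg _)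
    ((integrable_finsetSum _ hri).const_mul _) (ae_of_all _ fun ω => ?_)
  show |_| ≤ (n : ℝ)⁻¹ * ∑ t ∈ Finset.Icc (h + 1) n, rproc v ε n t ω ^ 2 * D n t ω
  rw [← mul_sub, ← Finset.sum_sub_distrib, abs_mul, abs_of_nonneg (by positivity : 0 ≤ (n : ℝ)⁻¹)]
  refine mul_le_mul_of_nonneg_left ((Finset.abs_sum_le_sum_abs _ _).trans
    (Finset.sum_le_sum fun t _ => ?_)) (by positivity)
  rw [← mul_sub, abs_mul, abs_of_nonneg (sq_nonneg _)]

end ReturnsModel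

end Consistency

section Limit

variable {Ω : Type*} [MeasurableSpace Ω] {μ : Measure Ω} [IsProbabilityMeasure μ]
  {ε : ℕ → ℕ → Ω → ℝ} {v : ℝ → ℝ} {g : ℕ → ℝ → ℝ} {m : ℕ} {c V C ν : ℝ}
  {K : ℝ → ℝ} {b : ℕ → ℝ} {R : ℝ}

namespace ReturnsModel

lemma integrable_gammaHat0 (H : ReturnsModel μ ε v g m c V C ν) (n h : ℕ) :
    Integrable (gammaHat0 v ε n h) μ := by
  unfold gammaHat0
  refine (integrable_finsetSum _ fun t ht => ?_).const_mul _
  rw [Finset.mem_Icc] at ht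
  refine ((H.integrable_mul (h := h) (by omega) ht.2).const_mul
    (v ((t : ℝ) / n) * v (((t - h : ℕ) : ℝ) / n))).congr (ae_of_all _ fun ω => ?_)
  simp only [rproc]
  ring

/-- The empirical autocovariance `γ̂_0(h)` is close in mean to `ρ` times the average of
`v² g_h`. -/
lemma tendsto_integral_gammaHat0 (H : ReturnsModel μ ε v g m c V C ν) {h : ℕ} (hm : h ≤ m)
    {E : Finset ℝ} {L : ℝ} (hv : LipschitzAwayFrom E L v) {ρ : ℝ}
    (hρ : ∀ n t : ℕ, h < t → t ≤ n →
      ∫ ω, ε n t ω * ε n (t - h) ω ∂μ = g h ((t : ℝ) / n) * ρ) :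
    Tendsto (fun n : ℕ => ∫ ω, |gammaHat0 v ε n h ω - ρ * ((n : ℝ)⁻¹ *
      ∑ t ∈ Finset.Icc (h + 1) n, v ((t : ℝ) / n) ^ 2 * g h ((t : ℝ) / n))| ∂μ)
      atTop (nhds 0) := by
  have hV := H.V_pos
  have hmem : ∀ {n t : ℕ}, t ∈ Finset.Icc (h + 1) n →
      (t : ℝ) / n ∈ Ioc (0 : ℝ) 1 ∧ ((t - h : ℕ) : ℝ) / n ∈ Ioc (0 : ℝ) 1 := fun {n t} ht => by
    rw [Finset.mem_Icc] at ht
    exact ⟨div_mem_Ioc (by omega) ht.2, div_mem_Ioc (by omega) (by omega)⟩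
  set q : ℕ → ℕ → ℝ := fun n t => v ((t : ℝ) / n) * v (((t - h : ℕ) : ℝ) / n) with hq
  have h1 := H.tendsto_average_mul (le_refl h) (q := q) (Q := V * V)
    (f := fun s => g h s * ρ) (fun n t ht => by
      obtain ⟨hu, hu'⟩ := hmem ht
      rw [abs_mul, abs_of_pos (H.v_pos _ hu), abs_of_pos (H.v_pos _ hu')]
      exact mul_le_mul (H.v_le _ hu) (H.v_le _ hu') (H.v_pos _ hu').le hV.le)
    (fun n t ht => by
      rw [Finset.mem_Icc] at ht
      exact hρ n t (by omega) ht.2)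
  set F : ℕ → ℕ → ℝ := fun n t =>
    |q n t * (g h ((t : ℝ) / n) * ρ) - ρ * (v ((t : ℝ) / n) ^ 2 * g h ((t : ℝ) / n))| with hF
  have hFle : ∀ n, ∀ t ∈ Finset.Icc (h + 1) n,
      F n t ≤ V * |ρ| * |v (((t - h : ℕ) : ℝ) / n) - v ((t : ℝ) / n)| := by
    intro n t ht
    obtain ⟨hu, -⟩ := hmem ht
    have e : q n t * (g h ((t : ℝ) / n) * ρ) - ρ * (v ((t : ℝ) / n) ^ 2 * g h ((t : ℝ) / n))
        = v ((t : ℝ) / n) * g h ((t : ℝ) / n) * ρ *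
          (v (((t - h : ℕ) : ℝ) / n) - v ((t : ℝ) / n)) := by
      simp only [hq]; ring
    simp only [hF]
    rw [e, abs_mul, abs_mul, abs_mul, abs_of_pos (H.v_pos _ hu),
      abs_of_pos (H.c_pos.trans (H.g_gt h hm _ hu))]
    gcongr
    exact (mul_le_of_le_one_right (H.v_pos _ hu).le (H.g_le h hm _ hu)).trans (H.v_le _ hu)
  have h2 : Tendsto (fun n : ℕ => (n : ℝ)⁻¹ * ∑ t ∈ Finset.Icc (h + 1) n, F n t) atTop
      (nhds 0) := by
    refine tendsto_average_of_small_away (E := E) (B := V * |ρ| * V) ?_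
      (fun n t _ => abs_nonneg _) ?_
    · intro n t ht
      obtain ⟨hu, hu'⟩ := hmem ht
      refine (hFle n t ht).trans ?_
      gcongr
      have := H.v_pos _ hu
      have := H.v_pos _ hu'
      have := H.v_le _ hu
      have := H.v_le _ hu'
      exact abs_le.2 ⟨by linarith, by linarith⟩
    · intro δ hδ η hη
      have hn : Tendsto (fun n : ℕ => (h : ℝ) / n) atTop (nhds 0) :=
        tendsto_const_div_atTop_nhds_zero_nat _
      have hn' : Tendsto (fun n : ℕ => V * |ρ| * (L * ((h : ℝ) / n))) atTop (nhds 0) := by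
        simpa using (hn.const_mul L).const_mul (V * |ρ|)
      filter_upwards [hn.eventually (gt_mem_nhds hδ), hn'.eventually (ge_mem_nhds hη)]
        with n k1 k2 t ht hE
      obtain ⟨hu, -⟩ := hmem ht
      rw [Finset.mem_Icc] at ht
      have e : |((t - h : ℕ) : ℝ) / n - (t : ℝ) / n| = (h : ℝ) / n := by
        rw [← sub_div, Nat.cast_sub (by omega), sub_sub_cancel_left, abs_div, abs_neg,
          Nat.abs_cast, Nat.abs_cast]
      have h3 := (hv δ hδ _ hu hE (((t - h : ℕ) : ℝ) / n) (by rw [e]; exact k1)).2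
      rw [e] at h3
      refine (hFle n t (Finset.mem_Icc.2 ht)).trans (le_trans ?_ k2)
      gcongr
  refine tendsto_integral_abs_sub_trans (fun n => H.integrable_gammaHat0 n h)
    (Y := fun n _ => (n : ℝ)⁻¹ * ∑ t ∈ Finset.Icc (h + 1) n, q n t * (g h ((t : ℝ) / n) * ρ))
    (fun n => integrable_const _) (fun n => integrable_const _) ?_ ?_
  · refine h1.congr fun n => ?_
    congr 1
    ext ω
    congr 2
    unfold gammaHat0
    congr 1
    refine Finset.sum_congr rfl fun t _ => ?_
    simp only [hq, rproc]
    ring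
  · refine squeeze_zero (fun n => integral_nonneg fun ω => abs_nonneg _) (fun n => ?_) h2
    rw [integral_const, probReal_univ, one_smul, mul_left_comm, ← mul_sub, Finset.mul_sum,
      ← Finset.sum_sub_distrib, abs_mul, abs_of_nonneg (by positivity : 0 ≤ (n : ℝ)⁻¹)]
    exact mul_le_mul_of_nonneg_left (Finset.abs_sum_le_sum_abs _ _) (by positivity)

lemma integrable_average_pratio (H : ReturnsModel μ ε v g m c V C ν) (hK : ∀ z, 0 ≤ K z)
    (n h : ℕ) :
    Integrable (fun ω => (n : ℝ)⁻¹ * ∑ t ∈ Finset.Icc (h + 1) n,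
      rproc v ε n t ω ^ 2 * pratio v ε K b n h t ω) μ := by
  refine (integrable_finsetSum _ fun t ht => ?_).const_mul _
  rw [Finset.mem_Icc] at ht
  refine H.integrable_sq_mul (by omega) ht.2 (measurable_pratio H.meas n h t) (B := 1) fun ω => ?_
  rw [abs_of_nonneg (pratio_nonneg hK n h t ω)]
  exact pratio_le_one hK n h t ω

/-- The rescaled denominator `((n-h)/n) γ̂_{ar²}(h)` is close in mean to the average of
`v² g_h`. -/
lemma tendsto_integral_average_pratio_sub (H : ReturnsModel μ ε v g m c V C ν)
    (HK : KernelBandwidth K R b) {h : ℕ} (hm : h ≤ m) {E : Finset ℝ} {L₀ L : ℝ} (hL₀ : 0 ≤ L₀)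
    (hL : 0 ≤ L) (hg₀ : LipschitzAwayFrom E L₀ (g 0)) (hg : LipschitzAwayFrom E L (g h))
    (hsq : ∀ n t : ℕ, 1 ≤ t → t ≤ n → ∫ ω, ε n t ω * ε n t ω ∂μ = g 0 ((t : ℝ) / n)) :
    Tendsto (fun n : ℕ => ∫ ω, |(n : ℝ)⁻¹ * ∑ t ∈ Finset.Icc (h + 1) n,
        rproc v ε n t ω ^ 2 * pratio v ε K b n h t ω
      - (n : ℝ)⁻¹ * ∑ t ∈ Finset.Icc (h + 1) n, v ((t : ℝ) / n) ^ 2 * g h ((t : ℝ) / n)| ∂μ)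
      atTop (nhds 0) := by
  have hc := H.c_pos
  have hV := H.V_pos
  have hmem : ∀ {n t : ℕ}, t ∈ Finset.Icc (h + 1) n → (t : ℝ) / n ∈ Ioc (0 : ℝ) 1 :=
    fun {n t} ht => by
      rw [Finset.mem_Icc] at ht
      exact div_mem_Ioc (by omega) ht.2
  set q : ℕ → ℕ → ℝ := fun n t =>
    v ((t : ℝ) / n) ^ 2 * (g h ((t : ℝ) / n) / g 0 ((t : ℝ) / n)) with hq
  have h1 := H.tendsto_average_mul (Nat.zero_le h) (q := q) (Q := V ^ 2 * c⁻¹)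
    (f := g 0) (fun n t ht => by
      have hu := hmem ht
      have k0 := H.g_gt 0 (Nat.zero_le _) _ hu
      have kh := H.g_gt h hm _ hu
      have kv := H.v_pos _ hu
      have kV := H.v_le _ hu
      rw [abs_of_nonneg (mul_nonneg (sq_nonneg _)
        (div_nonneg (hc.trans kh).le (hc.trans k0).le))]
      refine mul_le_mul (by gcongr) ?_ (div_nonneg (hc.trans kh).le (hc.trans k0).le)
        (sq_nonneg _)
      rw [div_le_iff₀ (hc.trans k0), inv_mul_eq_div, le_div_iff₀ hc]
      nlinarith [H.g_le h hm _ hu])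
    (fun n t ht => by
      rw [Finset.mem_Icc] at ht
      exact hsq n t (by omega) ht.2)
  refine tendsto_integral_abs_sub_trans (fun n => H.integrable_average_pratio HK.nonneg n h)
    (fun n => ?_) (fun n => integrable_const _)
    (H.tendsto_integral_average_pratio HK hm hL₀ hL hg₀ hg) ?_
  · refine (integrable_finsetSum _ fun t ht => ?_).const_mul _
    rw [Finset.mem_Icc] at ht
    exact H.integrable_sq_mul (by omega) ht.2 measurable_const fun ω => le_rfl
  · refine h1.congr fun n => ?_
    congr 1
    ext ω
    congr 3
    · refine Finset.sum_congr rfl fun t _ => ?_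
      simp only [hq, rproc, Nat.sub_zero]
      ring
    · refine Finset.sum_congr rfl fun t ht => ?_
      have k0 := hc.trans (H.g_gt 0 (Nat.zero_le _) _ (hmem ht))
      simp only [hq]
      field_simp

/-- Consistency of a single corrected autocorrelation. -/
lemma tendsto_measureReal_rhoHatVpr (H : ReturnsModel μ ε v g m c V C ν)
    (HK : KernelBandwidth K R b) (hv : PiecewiseLipschitzOn01 v)
    (hg : ∀ h ≤ m, PiecewiseLipschitzOn01 (g h))
    (hsq : ∀ n t : ℕ, 1 ≤ t → t ≤ n → ∫ ω, ε n t ω * ε n t ω ∂μ = g 0 ((t : ℝ) / n))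
    {h : ℕ} (hm : h ≤ m) {ρ : ℝ}
    (hρ : ∀ n t : ℕ, h < t → t ≤ n →
      ∫ ω, ε n t ω * ε n (t - h) ω ∂μ = g h ((t : ℝ) / n) * ρ) {η : ℝ} (hη : 0 < η) :
    Tendsto (fun n => μ.real {ω | η ≤ |rhoHatVpr v ε K b n h ω - ρ|}) atTop (nhds 0) := by
  classical
  obtain ⟨Ev, Lv, hLv, hv⟩ := hv.exists_lipschitzAwayFrom
  obtain ⟨E0, L0, hL0, hg0⟩ := (hg 0 (Nat.zero_le _)).exists_lipschitzAwayFrom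
  obtain ⟨Eh, Lh, hLh, hgh⟩ := (hg h hm).exists_lipschitzAwayFrom
  have hnum := H.tendsto_integral_gammaHat0 hm hv hρ
  have hvar := H.tendsto_integral_gammaHat0 (Nat.zero_le m) hv (ρ := 1)
    (fun n t ht htn => by simpa using hsq n t ht htn)
  have hden := H.tendsto_integral_average_pratio_sub HK hm hL0 hLh
    (hg0.mono Finset.subset_union_left) (hgh.mono (Finset.subset_union_right (s₁ := E0))) hsq
  obtain ⟨κ₀, hκ₀, hs₀⟩ := eventually_le_average H.c_pos hv hLv H.v_pos
    (H.g_gt 0 (Nat.zero_le _)) 0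
  obtain ⟨κ, hκ, hs⟩ := eventually_le_average H.c_pos hv hLv H.v_pos (H.g_gt h hm) h
  obtain ⟨τ, hτ, htol⟩ := exists_ratio_tolerance ρ hκ hη
  have p1 := tendsto_measureReal_of_tendsto_integral (fun n => H.integrable_gammaHat0 n h) hnum hτ
  have p2 := tendsto_measureReal_of_tendsto_integral
    (fun n => H.integrable_average_pratio HK.nonneg n h) hden hτ
  have p3 := tendsto_measureReal_of_tendsto_integral (fun n => H.integrable_gammaHat0 n 0) hvar hκ₀
  have hp : Tendsto (fun n : ℕ => (h : ℝ) / n) atTop (nhds 0) :=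
    tendsto_const_div_atTop_nhds_zero_nat _
  refine squeeze_zero' (Eventually.of_forall fun n => measureReal_nonneg) ?_
    (by simpa using (p1.add p2).add p3)
  filter_upwards [hs₀, hs, hp.eventually (gt_mem_nhds hτ), eventually_gt_atTop h]
    with n k₀ k kp hn
  refine le_trans (measureReal_mono fun ω hω => ?_)
    ((measureReal_union_le _ _).trans (add_le_add (measureReal_union_le _ _) le_rfl))
  by_contra hnot
  simp only [mem_union, mem_ofPred_eq, not_or, not_le] at hnot
  obtain ⟨⟨a1, a2⟩, a3⟩ := hnot
  refine absurd (show η ≤ |rhoHatVpr v ε K b n h ω - ρ| from hω) (not_le.2 ?_)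
  set G := gammaHat0 v ε n 0 ω with hG
  have hG0 : G ≠ 0 := by
    have := (abs_lt.1 a3).1
    intro h0
    rw [h0] at this
    linarith
  have hn0 : (0 : ℝ) < n := by exact_mod_cast (Nat.zero_le h).trans_lt hn
  have hnh : (0 : ℝ) < (n : ℝ) - h := sub_pos.2 (by exact_mod_cast hn)
  have hpn : |((n : ℝ) - h) / n - 1| < τ := by
    have e : ((n : ℝ) - h) / n - 1 = -((h : ℝ) / n) := by field_simp; ring
    rw [e, abs_neg, abs_of_nonneg (by positivity)]
    exact kp
  have hfin := htol _ _ _ _ k a1 a2 hpn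
  have e : rhoHatVpr v ε K b n h ω = ((n : ℝ) - h) / n * gammaHat0 v ε n h ω /
      ((n : ℝ)⁻¹ * ∑ t ∈ Finset.Icc (h + 1) n,
        rproc v ε n t ω ^ 2 * pratio v ε K b n h t ω) := by
    show G / (((n : ℝ) - h)⁻¹ * ∑ t ∈ Finset.Icc (h + 1) n,
        rproc v ε n t ω ^ 2 * pratio v ε K b n h t ω) * (gammaHat0 v ε n h ω / G) = _
    rw [div_mul_div_comm, mul_comm G, mul_div_mul_right _ _ hG0]
    simp only [div_eq_mul_inv, mul_inv, inv_inv]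
    field_simp
  rw [e]
  exact hfin

end ReturnsModel

lemma tendstoInMeasure_pi_of_tendsto_measureReal {k : ℕ} {X : ℕ → Ω → Fin k → ℝ} {x : Fin k → ℝ}
    (h : ∀ i, ∀ η > 0, Tendsto (fun n => μ.real {ω | η ≤ |X n ω i - x i|}) atTop (nhds 0)) :
    TendstoInMeasure μ X atTop fun _ => x := by
  rw [tendstoInMeasure_iff_measureReal_dist]
  intro η hη
  have hsum : Tendsto (fun n => ∑ i, μ.real {ω | η ≤ |X n ω i - x i|}) atTop (nhds 0) := by
    simpa using tendsto_finsetSum Finset.univ fun i _ => h i η hη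
  refine squeeze_zero (fun n => measureReal_nonneg) (fun n => ?_) hsum
  refine (measureReal_mono fun ω hω => ?_).trans (measureReal_iUnion_fintype_le _)
  by_contra hnot
  simp only [mem_iUnion, mem_ofPred_eq, not_exists, not_le] at hnot
  exact absurd hω (not_le.2 ((dist_pi_lt_iff hη).2 fun i => by
    rw [Real.dist_eq]; exact hnot i))

end Limit

/-- Under the non-stationary zero-returns model with mixing and the
kernel/bandwidth assumption, the corrected autocorrelation vector
`Γ̂_vpr(m) = (ρ̂_vpr(1),…,ρ̂_vpr(m))'` converges in probability to
`Γ_ε(m) = (ρ_ε(1),…,ρ_ε(m))'`. -/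
theorem stmt10 {Ω : Type*} [MeasurableSpace Ω] (μ : Measure Ω) [IsProbabilityMeasure μ]
    (m : ℕ) (v : ℝ → ℝ) (g : ℕ → ℝ → ℝ) (c : ℝ) (ε : ℕ → ℕ → Ω → ℝ) (ν μ2 : ℝ)
    (K : ℝ → ℝ) (R : ℝ) (b : ℕ → ℝ)
    -- deterministic variance function `v`
    (hc : 0 < c)
    (hv_pos : ∀ s ∈ Set.Ioc (0 : ℝ) 1, 0 < v s)
    (hv_bdd : ∃ M, ∀ s ∈ Set.Ioc (0 : ℝ) 1, |v s| ≤ M)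
    (hv_lip : PiecewiseLipschitzOn01 v)
    (hv_ext : ∃ L, Tendsto v (nhdsWithin 0 (Set.Ioi 0)) (nhds L) ∧ ∀ u ≤ (0 : ℝ), v u = L)
    -- deterministic zero-returns probability functions `g_h`, `h = 0,…,m`
    (hg_bnd : ∀ h ≤ m, ∀ s ∈ Set.Ioc (0 : ℝ) 1, c < g h s ∧ g h s ≤ 1)
    (hg_lip : ∀ h ≤ m, PiecewiseLipschitzOn01 (g h))
    (hg_ext : ∀ h ≤ m, ∃ L, Tendsto (g h) (nhdsWithin 0 (Set.Ioi 0)) (nhds L) ∧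
      ∀ u ≤ (0 : ℝ), g h u = L)
    -- the innovations are measurable and `P(a_t a_{t-h} = 1) = g_h(t/n)`
    (hε_meas : ∀ n t, Measurable (ε n t))
    (hprob : ∀ h ≤ m, ∀ n t : ℕ, h < t → t ≤ n →
      (μ {ω | aproc v ε n t ω * aproc v ε n (t - h) ω = 1}).toReal = g h ((t : ℝ) / n))
    -- identifiability: `E(ε_t | a_t = 1) = 0` and `E(ε_t² | a_t = 1) = 1`
    (hident1 : ∀ n t : ℕ, 1 ≤ t → t ≤ n →
      ∫ ω, ε n t ω ∂(μ[|{ω | aproc v ε n t ω = 1}]) = 0)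
    (hident2 : ∀ n t : ℕ, 1 ≤ t → t ≤ n →
      ∫ ω, (ε n t ω) ^ 2 ∂(μ[|{ω | aproc v ε n t ω = 1}]) = 1)
    -- conditional strict stationarity
    (hstat : ∀ n k t h : ℕ,
      (μ[|{ω | (∀ i ≤ k, aproc v ε n (t + i) ω = 1) ∧
          ∀ i ≤ k, aproc v ε n (t + h + i) ω = 1}]).map
        (fun ω => fun i : Fin (k + 1) => ε n (t + (i : ℕ)) ω)
      = (μ[|{ω | (∀ i ≤ k, aproc v ε n (t + i) ω = 1) ∧
          ∀ i ≤ k, aproc v ε n (t + h + i) ω = 1}]).map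
        (fun ω => fun i : Fin (k + 1) => ε n (t + h + (i : ℕ)) ω))
    -- strong mixing and moment conditions
    (hν : 0 < ν) (hμ2a : 1 ≤ μ2) (hμ2b : μ2 < 1 + ν) (hμ2c : 1 + ν < 2 * μ2)
    (hmix : Summable (fun h : ℕ => alphaMix μ ε h ^ (1 - 1 / (2 * μ2))))
    (hmom : ∃ M : ℝ, ∀ n t : ℕ, 1 ≤ t → t ≤ n →
      ∫⁻ ω, ENNReal.ofReal (|ε n t ω| ^ (2 + 2 * ν)) ∂μ ≤ ENNReal.ofReal M)
    -- kernel and bandwidth assumption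
    (hK_cont : Continuous K) (hK_supp : HasCompactSupport K)
    (hK_nonneg : ∀ z, 0 ≤ K z) (hK_le : ∀ z, K z ≤ R)
    (hK_int : ∫ z : ℝ, K z = 1)
    (hb_pos : ∀ n, 0 < b n)
    (hb0 : Tendsto b atTop (nhds 0))
    (hnb : Tendsto (fun n : ℕ => 1 / ((n : ℝ) * (b n) ^ 2)) atTop (nhds 0))
    -- `ρ_ε(h)` does not depend on `t` nor on `n`
    (ρε : ℕ → ℝ)
    (hρε : ∀ h : ℕ, 1 ≤ h → h ≤ m → ∀ n t : ℕ, h < t → t ≤ n →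
      ∫ ω, ε n t ω * ε n (t - h) ω
          ∂(μ[|{ω | aproc v ε n t ω * aproc v ε n (t - h) ω = 1}]) = ρε h) :
    TendstoInMeasure μ
      (fun n : ℕ => fun ω => fun i : Fin m => rhoHatVpr v ε K b n (i + 1) ω) atTop
      (fun _ => fun i : Fin m => ρε (i + 1)) := by
  obtain ⟨V, hV⟩ := hv_bdd
  obtain ⟨M, hM⟩ := hmom
  have hrpow : ∀ n t, AEStronglyMeasurable (fun ω => |ε n t ω| ^ (2 + 2 * ν)) μ := fun n t =>
    ((continuous_abs.rpow_const fun _ => Or.inr (by positivity)).measurable.comp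
      (hε_meas n t)).aestronglyMeasurable
  have H : ReturnsModel μ ε v g m c V (max M 0) ν := {
    meas := hε_meas
    mixing := tendsto_alphaMix_of_summable_rpow
      (by rw [sub_pos, div_lt_one (by linarith)]; linarith) hmix
    nu_pos := hν
    c_pos := hc
    v_pos := hv_pos
    v_le := fun s hs => (le_abs_self _).trans (hV s hs)
    g_gt := fun h hm s hs => (hg_bnd h hm s hs).1
    g_le := fun h hm s hs => (hg_bnd h hm s hs).2
    prob := hprob
    mom := fun n t ht htn => ⟨hrpow n t, by
      rw [hasFiniteIntegral_iff_ofReal (ae_of_all _ fun ω => by positivity)]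
      exact (hM n t ht htn).trans_lt ENNReal.ofReal_lt_top⟩
    mom_le := fun n t ht htn => by
      rw [integral_eq_lintegral_of_nonneg_ae (ae_of_all _ fun ω => by positivity) (hrpow n t)]
      refine (ENNReal.toReal_mono ENNReal.ofReal_ne_top (hM n t ht htn)).trans_eq ?_
      rw [ENNReal.toReal_ofReal'] }
  have HK : KernelBandwidth K R b := {
    cont := hK_cont
    supp := hK_supp
    nonneg := hK_nonneg
    le := hK_le
    int := hK_int
    b_pos := hb_pos
    b_zero := hb0
    nb := tendsto_mul_bandwidth_atTop hb_pos hb0 hnb }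
  have hsq : ∀ n t : ℕ, 1 ≤ t → t ≤ n →
      ∫ ω, ε n t ω * ε n t ω ∂μ = g 0 ((t : ℝ) / n) := fun n t ht htn => by
    have hset : {ω | aproc v ε n t ω * aproc v ε n (t - 0) ω = 1}
        = {ω | aproc v ε n t ω = 1} := by
      ext ω
      rcases aproc_eq_zero_or_one v ε n t ω with h | h <;> simp [h]
    have := H.integral_mul_eq (h := 0) (ρ := 1) (Nat.zero_le m) ht htn (by
      rw [hset]
      simpa only [Nat.sub_zero, sq] using hident2 n t ht htn)
    simpa using this
  refine tendstoInMeasure_pi_of_tendsto_measureReal fun i η hη => ?_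
  have hi : (i : ℕ) + 1 ≤ m := i.2
  exact H.tendsto_measureReal_rhoHatVpr HK hv_lip hg_lip hsq hi
    (fun n t ht htn => H.integral_mul_eq hi ht htn (hρε _ (by omega) hi n t ht htn)) hη

end ZeroReturnsNS
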